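/- Let χ be a primitive even nontrivial Dirichlet character modulo q. Unconditionally, for any x ≥ 2 and any complex number s not equal to a zero of L(·,χ) and not in {0, -2, -4, -6, ...}, one has -L'/L(s,χ) = Σ_{2 ≤ n ≤ x} Λ(n)χ(n) n^{-s} · (log(x/n)/log x) + (1/log x)·(d/ds)(L'/L)(s,χ) + (1/log x)·Σ_ρ m_ρ · x^{ρ-s}/(ρ-s)² + (1/log x)·Σ_{m=0}^{∞} x^{-2m-s}/(2m+s)², where ρ runs over the zeros of L(·,χ) with 0 < Re ρ < 1, each counted with its multiplicity m_ρ (order of vanishing of L(·,χ) at ρ). -/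

import Mathlib

open Complex

/-!
Let `f` be an entire function of order less than two. Jensen's inequality makes the sum of
`m ρ / ‖ρ - s‖ ^ 2` over its zeros finite, and the Borel–Carathéodory theorem, applied on large
discs to `f` divided by its zeros, shows that the first-order Taylor remainder of `f' / f` at `s`
is `∑ m ρ (z - s) ^ 2 / ((ρ - s) ^ 2 (z - ρ))`. For `f = L(·, χ)` put `z = s + w` and divide by
`w ^ 2`. For large `re w` every term is then a Laplace transform: `1 / (w - (ρ - s))` is that of
`exp ((ρ - s) u)`, and `n ^ (-w) / w ^ 2`, coming from the Dirichlet series of `L' / L`, is that of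
`max (u - log n) 0`. By uniqueness of Laplace transforms the identity holds between the functions
of `u` themselves, and `u = log x` is the explicit formula. The functional equation shows that the
zeros outside the critical strip are `0, -2, -4, ...` and that they are simple.
-/

section EntireFunctions

open Filter Topology Set Metric MeasureTheory

theorem exists_eq_mul_exp_of_ne_zero_on_ball {g : ℂ → ℂ} {c : ℂ} {R : ℝ} (hR : 0 < R)
    (hg : DifferentiableOn ℂ g (ball c R)) (hne : ∀ z ∈ ball c R, g z ≠ 0) :
    ∃ h : ℂ → ℂ, h c = 0 ∧ ∀ z ∈ ball c R,
      HasDerivAt h (logDeriv g z) z ∧ g z = g c * exp (h z) := by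
  have hlog : DifferentiableOn ℂ (logDeriv g) (ball c R) := (hg.deriv isOpen_ball).div hg hne
  obtain ⟨h, hc, hder⟩ := hlog.isExactOn_ball.with_val_at c 0
  refine ⟨h, hc, fun z hz => ⟨hder z hz, ?_⟩⟩
  have hquot : ∀ w ∈ ball c R, HasDerivAt (fun w => g w * exp (-h w)) 0 w := fun w hw => by
    have hgw := (hg.differentiableAt (isOpen_ball.mem_nhds hw)).hasDerivAt
    refine (hgw.mul (hder w hw).neg.cexp).congr_deriv ?_
    rw [logDeriv_apply]
    field_simp [hne w hw]
    ring
  have hconst := isOpen_ball.is_const_of_deriv_eq_zero (convex_ball c R).isPreconnected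
    (fun w hw => (hquot w hw).differentiableAt.differentiableWithinAt)
    (fun w hw => (hquot w hw).deriv) hz (mem_ball_self hR)
  simp only [hc, neg_zero, exp_zero, mul_one] at hconst
  rw [← hconst, mul_assoc, ← exp_add, neg_add_cancel, exp_zero, mul_one]

theorem norm_le_of_re_le_on_ball {h : ℂ → ℂ} {c : ℂ} {R M : ℝ} (hR : 0 < R) (hM : 0 < M)
    (hh : DifferentiableOn ℂ h (ball c R)) (hc : h c = 0) (hre : ∀ z ∈ ball c R, (h z).re ≤ M)
    {z : ℂ} (hz : z ∈ closedBall c (R / 2)) : ‖h z‖ ≤ 2 * M := by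
  have hmaps : MapsTo (fun w => c + w) (ball 0 R) (ball c R) := fun w hw => by simpa using hw
  rw [mem_closedBall_iff_norm] at hz
  have hBC := Complex.borelCaratheodory_zero (f := fun w => h (c + w)) hM
    (hh.comp (by fun_prop) hmaps) (fun w hw => hre _ (hmaps hw)) hR (z := z - c)
    (by rw [mem_ball_zero_iff]; linarith) (by simpa using hc)
  rw [add_sub_cancel] at hBC
  refine hBC.trans ?_
  rw [div_le_iff₀ (by linarith)]
  nlinarith

theorem norm_deriv_logDeriv_le_of_ne_zero_on_ball {g : ℂ → ℂ} {c : ℂ} {R M : ℝ} (hR : 0 < R)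
    (hM : 0 < M) (hg : DifferentiableOn ℂ g (ball c R)) (hne : ∀ z ∈ ball c R, g z ≠ 0)
    (hbound : ∀ z ∈ ball c R, ‖g z‖ ≤ Real.exp M * ‖g c‖) {z : ℂ} (hz : z ∈ ball c (R / 4)) :
    ‖deriv (logDeriv g) z‖ ≤ 64 * M / R ^ 2 := by
  obtain ⟨h, hc, hh⟩ := exists_eq_mul_exp_of_ne_zero_on_ball hR hg hne
  have hdiff : DifferentiableOn ℂ h (ball c R) := fun w hw =>
    (hh w hw).1.differentiableAt.differentiableWithinAt
  have hre : ∀ w ∈ ball c R, (h w).re ≤ M := fun w hw => by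
    have hb := hbound w hw
    rw [(hh w hw).2, norm_mul, norm_exp, mul_comm] at hb
    exact Real.exp_le_exp.mp
      (le_of_mul_le_mul_right hb (norm_pos_iff.mpr (hne c (mem_ball_self hR))))
  have hsub : closedBall z (R / 4) ⊆ closedBall c (R / 2) :=
    closedBall_subset_closedBall' (by rw [mem_ball] at hz; linarith)
  have hball : closedBall c (R / 2) ⊆ ball c R := closedBall_subset_ball (by linarith)
  have hderiv : deriv (logDeriv g) z = iteratedDeriv 2 h z := by
    rw [iteratedDeriv_succ, iteratedDeriv_one]
    refine Filter.EventuallyEq.deriv_eq ?_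
    filter_upwards [isOpen_ball.mem_nhds (ball_subset_ball (by linarith) hz : z ∈ ball c R)]
      with w hw using (hh w hw).1.deriv.symm
  rw [hderiv]
  refine (norm_iteratedDeriv_le_of_forall_mem_sphere_norm_le 2 (by positivity)
    ((hdiff.mono (hsub.trans hball)).diffContOnCl_ball subset_rfl) fun w hw =>
      norm_le_of_re_le_on_ball hR hM hdiff hc hre (hsub (sphere_subset_closedBall hw))).trans_eq ?_
  norm_num [Nat.factorial]
  field_simp
  norm_num

theorem exists_eq_pow_mul_of_analyticOrderAt_eq {f : ℂ → ℂ} (hf : Differentiable ℂ f) {a : ℂ}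
    {n : ℕ} (hn : analyticOrderAt f a = n) :
    ∃ g : ℂ → ℂ, Differentiable ℂ g ∧ g a ≠ 0 ∧ ∀ z, f z = (z - a) ^ n * g z := by
  induction n generalizing f with
  | zero => exact ⟨f, hf, (hf.analyticAt a).analyticOrderAt_eq_zero.mp hn, by simp⟩
  | succ n ih =>
    have hfa : f a = 0 := by
      by_contra hne
      rw [(hf.analyticAt a).analyticOrderAt_eq_zero.mpr hne] at hn
      exact absurd hn (by norm_cast)
    have hslope : ∀ z, f z = (z - a) * dslope f a z := fun z => by
      simpa [hfa] using (sub_smul_dslope f a z).symm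
    have hd : Differentiable ℂ (dslope f a) := fun z =>
      ((differentiableOn_dslope univ_mem).mpr hf.differentiableOn).differentiableAt univ_mem
    have hord : analyticOrderAt (dslope f a) a = n := by
      have hmul := analyticOrderAt_mul (f := fun z => z - a) (by fun_prop) (hd.analyticAt a)
      rw [show (fun z => z - a) * dslope f a = f from funext fun z => (hslope z).symm, hn,
        analyticOrderAt_id_sub_const_self, Nat.cast_succ, add_comm] at hmul
      exact (ENat.add_right_injective_of_ne_top ENat.one_ne_top hmul).symm
    obtain ⟨g, hg, hga, hfg⟩ := ih hd hord
    exact ⟨g, hg, hga, fun z => by rw [hslope, hfg]; ring⟩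

theorem exists_eq_prod_pow_analyticOrderNatAt_mul {f : ℂ → ℂ} (hf : Differentiable ℂ f) {s : ℂ}
    (hs : f s ≠ 0) (S : Finset ℂ) :
    ∃ g : ℂ → ℂ, Differentiable ℂ g ∧ (∀ ρ ∈ S, g ρ ≠ 0) ∧
      ∀ z, f z = (∏ ρ ∈ S, (z - ρ) ^ analyticOrderNatAt f ρ) * g z := by
  induction S using Finset.induction_on with
  | empty => exact ⟨f, hf, by simp, by simp⟩
  | insert a S ha ih =>
    obtain ⟨g, hg, hgS, hfg⟩ := ih
    set P : ℂ → ℂ := fun z => ∏ ρ ∈ S, (z - ρ) ^ analyticOrderNatAt f ρ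
    have hPd : Differentiable ℂ P := by fun_prop
    have hPa : P a ≠ 0 := Finset.prod_ne_zero_iff.mpr fun ρ hρ =>
      pow_ne_zero _ (sub_ne_zero.mpr fun h => ha (h ▸ hρ))
    have hfin : analyticOrderAt f a ≠ ⊤ := fun htop =>
      hs (congrFun ((AnalyticOnNhd.analyticOrderAt_eq_top_iff_eq_zero a
        hf.analyticAt).mp htop) s)
    have hord : analyticOrderAt g a = analyticOrderNatAt f a := by
      rw [Nat.cast_analyticOrderNatAt hfin, show f = P * g from funext hfg,
        analyticOrderAt_mul (hPd.analyticAt a) (hg.analyticAt a),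
        (hPd.analyticAt a).analyticOrderAt_eq_zero.mpr hPa, zero_add]
    obtain ⟨g', hg', hg'a, hgg'⟩ := exists_eq_pow_mul_of_analyticOrderAt_eq hg hord
    refine ⟨g', hg', fun ρ hρ => ?_, fun z => ?_⟩
    · rcases Finset.mem_insert.mp hρ with rfl | hρ
      · exact hg'a
      · exact right_ne_zero_of_mul (hgg' ρ ▸ hgS ρ hρ)
    · rw [Finset.prod_insert ha, hfg z, hgg' z]
      ring

theorem finite_zeros_inter_closedBall {f : ℂ → ℂ} (hf : Differentiable ℂ f) {s : ℂ} (hs : f s ≠ 0)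
    (c : ℂ) (R : ℝ) : ({z | f z = 0} ∩ closedBall c R).Finite := by
  by_contra hinf
  obtain ⟨a, -, hacc⟩ := Set.Infinite.exists_accPt_of_subset_isCompact hinf
    (isCompact_closedBall c R) inter_subset_right
  have hfreq : ∃ᶠ z in 𝓝[≠] a, f z = 0 :=
    (accPt_iff_frequently_nhdsNE.mp hacc).mono fun z hz => hz.1
  exact hs (AnalyticOnNhd.eqOn_zero_of_preconnected_of_frequently_eq_zero
    (fun z _ => hf.analyticAt z) isPreconnected_univ (mem_univ a) hfreq (mem_univ s))

/-- Jensen's inequality in its most elementary form: on the sphere of radius `3R` every factor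
`z - ρ` is at least twice as large as it is at the centre. -/
theorem two_pow_sum_mul_norm_le_of_eq_prod_mul {ι : Type*} {f g : ℂ → ℂ} (hg : Differentiable ℂ g)
    {T : Finset ι} {ρ : ι → ℂ} {n : ι → ℕ} (hfg : ∀ z, f z = (∏ i ∈ T, (z - ρ i) ^ n i) * g z)
    {s : ℂ} {R B : ℝ} (hR : 0 < R) (hρ : ∀ i ∈ T, ρ i ∈ closedBall s R)
    (hB : ∀ z ∈ sphere s (3 * R), ‖f z‖ ≤ B) {z : ℂ} (hz : z ∈ closedBall s (3 * R)) :
    2 ^ (∑ i ∈ T, n i) * ‖f s‖ * ‖g z‖ ≤ B * ‖g s‖ := by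
  have hfactor : ∀ w ∈ sphere s (3 * R), 2 ^ (∑ i ∈ T, n i) * ‖∏ i ∈ T, (s - ρ i) ^ n i‖ ≤
      ‖∏ i ∈ T, (w - ρ i) ^ n i‖ := fun w hw => by
    simp only [norm_prod, norm_pow, ← Finset.prod_pow_eq_pow_sum, ← Finset.prod_mul_distrib,
      ← mul_pow]
    refine Finset.prod_le_prod (fun i _ => by positivity) fun i hi => ?_
    have hsi := mem_closedBall_iff_norm'.mp (hρ i hi)
    have hwi := norm_sub_le_norm_sub_add_norm_sub w (ρ i) s
    rw [mem_sphere_iff_norm.mp hw, norm_sub_rev (ρ i)] at hwi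
    gcongr
    linarith
  have hsphere : ∀ w ∈ sphere s (3 * R),
      ‖(2 ^ (∑ i ∈ T, n i) * f s) * g w‖ ≤ B * ‖g s‖ := fun w hw => calc
    _ = 2 ^ (∑ i ∈ T, n i) * ‖∏ i ∈ T, (s - ρ i) ^ n i‖ * (‖g s‖ * ‖g w‖) := by
      rw [hfg s]; simp only [norm_mul, norm_pow, norm_ofNat]; ring
    _ ≤ ‖∏ i ∈ T, (w - ρ i) ^ n i‖ * (‖g s‖ * ‖g w‖) := by gcongr; exact hfactor w hw
    _ = ‖f w‖ * ‖g s‖ := by rw [hfg w, norm_mul]; ring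
    _ ≤ B * ‖g s‖ := by gcongr; exact hB w hw
  have hmax := norm_le_of_forall_mem_frontier_norm_le
    (f := fun w => (2 ^ (∑ i ∈ T, n i) * f s) * g w) (isBounded_ball (x := s) (r := 3 * R))
    (by fun_prop : Differentiable ℂ _).diffContOnCl
    (fun w hw => hsphere w (frontier_ball_subset_sphere hw))
    (by rwa [closure_ball _ (by positivity)])
  simpa only [norm_mul, norm_pow, norm_ofNat] using hmax

/-- `f` grows on `S` at most like the exponential of a constant multiple of `(1 + ‖z‖) ^ α`. For
`S = univ` this says that `f` has finite type with respect to the order `α`. -/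
def HasExpGrowthOn (α : ℝ) (f : ℂ → ℂ) (S : Set ℂ) : Prop :=
  ∃ C, 0 ≤ C ∧ ∀ z ∈ S, ‖f z‖ ≤ Real.exp (C * (1 + ‖z‖) ^ α)

theorem HasExpGrowthOn.exists_norm_le_exp_mul_norm {α : ℝ} {f : ℂ → ℂ}
    (hf : HasExpGrowthOn α f univ) (hα : 0 ≤ α) {s : ℂ} (hs : f s ≠ 0) {δ : ℝ} (hδ : 0 < δ) :
    ∃ K > 0, ∀ R ≥ δ, ∀ z ∈ closedBall s (3 * R), ‖f z‖ ≤ Real.exp (K * R ^ α) * ‖f s‖ := by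
  obtain ⟨C, hC, hgrowth⟩ := hf
  set A := (1 + ‖s‖) / δ + 3 with hA
  refine ⟨C * A ^ α + |Real.log ‖f s‖| / δ ^ α + 1, by positivity, fun R hR z hz => ?_⟩
  have hR0 : 0 < R := hδ.trans_le hR
  have hz1 : 1 + ‖z‖ ≤ A * R := by
    have hnorm := norm_le_norm_add_norm_sub' z s
    have hdist := mem_closedBall_iff_norm.mp hz
    have hscale : 1 + ‖s‖ ≤ (1 + ‖s‖) / δ * R := by
      rw [div_mul_eq_mul_div, le_div_iff₀ hδ]
      gcongr
    rw [hA, add_mul]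
    linarith
  have hmain : C * (1 + ‖z‖) ^ α ≤ C * A ^ α * R ^ α := by
    rw [mul_assoc, ← Real.mul_rpow (by positivity) hR0.le]
    gcongr
  have hlog : -Real.log ‖f s‖ ≤ |Real.log ‖f s‖| / δ ^ α * R ^ α := by
    refine (neg_le_abs _).trans ?_
    rw [div_mul_eq_mul_div, le_div_iff₀ (by positivity)]
    gcongr
  refine (hgrowth z (mem_univ z)).trans ?_
  rw [← Real.exp_log (norm_pos_iff.mpr hs), ← Real.exp_add, Real.exp_log (norm_pos_iff.mpr hs),
    Real.exp_le_exp]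
  nlinarith [Real.rpow_pos_of_pos hR0 α]

theorem sum_analyticOrderNatAt_le {f : ℂ → ℂ} (hf : Differentiable ℂ f) {s : ℂ} (hs : f s ≠ 0)
    {R M : ℝ} (hR : 0 < R) (hM : ∀ z ∈ sphere s (3 * R), ‖f z‖ ≤ Real.exp M * ‖f s‖)
    {S : Finset ℂ} (hS : ∀ ρ ∈ S, ρ ∈ closedBall s R) :
    ∑ ρ ∈ S, (analyticOrderNatAt f ρ : ℝ) ≤ 2 * M := by
  obtain ⟨g, hg, -, hfg⟩ := exists_eq_prod_pow_analyticOrderNatAt_mul hf hs S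
  have hgs : g s ≠ 0 := right_ne_zero_of_mul (hfg s ▸ hs)
  have hpow := two_pow_sum_mul_norm_le_of_eq_prod_mul hg hfg hR hS hM
    (mem_closedBall_self (x := s) (by positivity))
  rw [mul_assoc, mul_assoc] at hpow
  have hexp := le_of_mul_le_mul_right hpow (by positivity)
  have hlog := Real.log_le_log (by positivity) hexp
  rw [Real.log_pow, Real.log_exp] at hlog
  push_cast at hlog
  have hsum : (0 : ℝ) ≤ ∑ ρ ∈ S, (analyticOrderNatAt f ρ : ℝ) := by positivity
  nlinarith [Real.log_two_gt_d9]

/-- Writing `r ^ (-p)` as the integral of `p t ^ (-p - 1)` over `t > r` turns the sum into an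
integral of the counting function. -/
theorem summable_mul_rpow_neg_of_sum_le {ι : Type*} {m r : ι → ℝ} {δ K α p : ℝ} (hδ : 0 < δ)
    (hp : 0 < p) (hαp : α < p) (hm : ∀ i, 0 ≤ m i) (hr : ∀ i, δ ≤ r i)
    (hcount : ∀ R ≥ δ, ∀ T : Finset ι, (∀ i ∈ T, r i ≤ R) → ∑ i ∈ T, m i ≤ K * R ^ α) :
    Summable fun i => m i * r i ^ (-p) := by
  have hr0 : ∀ i, 0 < r i := fun i => hδ.trans_le (hr i)
  have htail : ∀ {a : ℝ}, 0 < a → ∀ {β : ℝ}, β < -1 → IntegrableOn (fun t : ℝ => t ^ β) (Ioi a) :=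
    fun ha _ hβ => integrableOn_Ioi_rpow_of_lt hβ ha
  refine summable_of_sum_le (c := ∫ t in Ioi δ, p * (K * t ^ (α - p - 1)))
    (fun i => mul_nonneg (hm i) (Real.rpow_nonneg (hr0 i).le _)) fun T => ?_
  have hlayer : ∀ i, m i * r i ^ (-p) =
      ∫ t in Ioi δ, (Ioi (r i)).indicator (fun t => p * (m i * t ^ (-p - 1))) t := fun i => by
    rw [setIntegral_indicator measurableSet_Ioi,
      inter_eq_self_of_subset_right (Ioi_subset_Ioi (hr i)), integral_const_mul, integral_const_mul,
      integral_Ioi_rpow_of_lt (by linarith) (hr0 i)]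
    rw [sub_add_cancel]
    field_simp
  have hint : ∀ i, IntegrableOn ((Ioi (r i)).indicator fun t => p * (m i * t ^ (-p - 1))) (Ioi δ) :=
    fun i => (((htail hδ (by linarith)).const_mul _).const_mul _).indicator measurableSet_Ioi
  rw [Finset.sum_congr rfl fun i _ => hlayer i, ← integral_finsetSum _ fun i _ => hint i]
  refine setIntegral_mono_on (integrable_finsetSum _ fun i _ => hint i)
    (((htail hδ (by linarith)).const_mul _).const_mul _) measurableSet_Ioi fun t ht => ?_
  have ht0 : 0 < t := hδ.trans ht
  calc ∑ i ∈ T, (Ioi (r i)).indicator (fun t => p * (m i * t ^ (-p - 1))) t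
      = p * ((∑ i ∈ T with r i < t, m i) * t ^ (-p - 1)) := by
        simp only [indicator_apply, mem_Ioi, Finset.sum_filter, Finset.sum_mul, Finset.mul_sum,
          ite_mul, zero_mul, mul_ite, mul_zero]
    _ ≤ p * (K * t ^ α * t ^ (-p - 1)) := by
        gcongr
        exact hcount t ht.le _ fun i hi => (Finset.mem_filter.mp hi).2.le
    _ = p * (K * t ^ (α - p - 1)) := by
        rw [mul_assoc, ← Real.rpow_add ht0]
        ring_nf

/-- The remainder of the first-order Taylor expansion of `F` at `s`, evaluated at `z`. For
`F = logDeriv f` it is the part of `F` which the partial fraction expansion of an entire function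
`f` of order less than two recovers. -/
noncomputable def taylorRemainder (F : ℂ → ℂ) (s z : ℂ) : ℂ := F z - F s - (z - s) * deriv F s

theorem norm_taylorRemainder_le {F : ℂ → ℂ} {s z : ℂ} {r B : ℝ}
    (hF : DifferentiableOn ℂ F (ball s r)) (hB : ∀ w ∈ ball s r, ‖deriv F w‖ ≤ B)
    (hz : z ∈ ball s r) :
    ‖taylorRemainder F s z‖ ≤ 2 * B * ‖z - s‖ := by
  have hs : s ∈ ball s r := mem_ball_self (pos_of_mem_ball hz)
  have hmean := (convex_ball s r).norm_image_sub_le_of_norm_deriv_le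
    (fun w hw => hF.differentiableAt (isOpen_ball.mem_nhds hw)) hB hs hz
  have hlin : ‖(z - s) * deriv F s‖ ≤ B * ‖z - s‖ := by
    rw [norm_mul, mul_comm]
    gcongr
    exact hB s hs
  exact (norm_sub_le _ _).trans (by linarith)

theorem taylorRemainder_congr {F G : ℂ → ℂ} {s z : ℂ} (hs : F =ᶠ[𝓝 s] G) (hz : F z = G z) :
    taylorRemainder F s z = taylorRemainder G s z := by
  rw [taylorRemainder, taylorRemainder, hs.deriv_eq, hs.eq_of_nhds, hz]

theorem logDeriv_prod_pow_mul {g : ℂ → ℂ} (hg : Differentiable ℂ g) (S : Finset ℂ) (n : ℂ → ℕ)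
    {z : ℂ} (hz : z ∉ S) (hgz : g z ≠ 0) :
    logDeriv (fun w => (∏ ρ ∈ S, (w - ρ) ^ n ρ) * g w) z =
      ∑ ρ ∈ S, (n ρ : ℂ) / (z - ρ) + logDeriv g z := by
  have hne : ∀ ρ ∈ S, (z - ρ) ^ n ρ ≠ 0 := fun ρ hρ =>
    pow_ne_zero _ (sub_ne_zero.mpr (ne_of_mem_of_not_mem hρ hz).symm)
  rw [logDeriv_mul z (Finset.prod_ne_zero_iff.mpr hne) hgz (by fun_prop) (hg z),
    logDeriv_prod hne fun ρ _ => by fun_prop]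
  congr 1
  refine Finset.sum_congr rfl fun ρ _ => ?_
  rw [logDeriv_fun_pow (by fun_prop), logDeriv_apply, deriv_sub_const, deriv_id'', mul_one_div]

theorem taylorRemainder_sum_div_sub_add {S : Finset ℂ} {n : ℂ → ℂ} {G : ℂ → ℂ} {s z : ℂ}
    (hs : s ∉ S) (hz : z ∉ S) (hG : DifferentiableAt ℂ G s) :
    taylorRemainder (fun w => ∑ ρ ∈ S, n ρ / (w - ρ) + G w) s z =
      ∑ ρ ∈ S, n ρ * (z - s) ^ 2 / ((ρ - s) ^ 2 * (z - ρ)) + taylorRemainder G s z := by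
  have hderiv : HasDerivAt (fun w => ∑ ρ ∈ S, n ρ / (w - ρ) + G w)
      (∑ ρ ∈ S, -n ρ / (s - ρ) ^ 2 + deriv G s) s := by
    refine HasDerivAt.add (HasDerivAt.fun_sum fun ρ hρ => ?_) hG.hasDerivAt
    simpa using (hasDerivAt_const s (n ρ)).fun_div ((hasDerivAt_id s).sub_const ρ)
      (sub_ne_zero.mpr (ne_of_mem_of_not_mem hρ hs).symm)
  have hterm : ∀ ρ ∈ S, n ρ * (z - s) ^ 2 / ((ρ - s) ^ 2 * (z - ρ)) =
      n ρ / (z - ρ) - n ρ / (s - ρ) - (z - s) * (-n ρ / (s - ρ) ^ 2) := fun ρ hρ => by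
    have hsρ := sub_ne_zero.mpr (ne_of_mem_of_not_mem hρ hs).symm
    have hzρ := sub_ne_zero.mpr (ne_of_mem_of_not_mem hρ hz).symm
    rw [← neg_sub s ρ, neg_sq]
    field_simp
    ring
  rw [taylorRemainder, taylorRemainder, hderiv.deriv, Finset.sum_congr rfl hterm]
  simp only [Finset.sum_sub_distrib, ← Finset.mul_sum]
  ring

theorem taylorRemainder_logDeriv_prod_pow_mul {g : ℂ → ℂ} (hg : Differentiable ℂ g) {S : Finset ℂ}
    {n : ℂ → ℕ} {s z : ℂ} (hs : s ∉ S) (hz : z ∉ S) (hgs : g s ≠ 0) (hgz : g z ≠ 0) :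
    taylorRemainder (logDeriv fun w => (∏ ρ ∈ S, (w - ρ) ^ n ρ) * g w) s z =
      ∑ ρ ∈ S, (n ρ : ℂ) * (z - s) ^ 2 / ((ρ - s) ^ 2 * (z - ρ)) +
        taylorRemainder (logDeriv g) s z := by
  have hlog : DifferentiableAt ℂ (logDeriv g) s :=
    ((hg.analyticAt s).deriv.differentiableAt).div (hg s) hgs
  rw [← taylorRemainder_sum_div_sub_add hs hz hlog]
  refine taylorRemainder_congr ?_ (logDeriv_prod_pow_mul hg S n hz hgz)
  filter_upwards [S.finite_toSet.isClosed.isOpen_compl.mem_nhds hs,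
    hg.continuous.continuousAt.eventually_ne hgs] with w hwS hgw
    using logDeriv_prod_pow_mul hg S n hwS hgw

theorem norm_taylorRemainder_logDeriv_sub_sum_le {f : ℂ → ℂ} (hf : Differentiable ℂ f) {s : ℂ}
    (hs : f s ≠ 0) {R M : ℝ} (hR : 0 < R) (hM : 0 < M)
    (hbound : ∀ z ∈ closedBall s (3 * R), ‖f z‖ ≤ Real.exp M * ‖f s‖) {S : Finset ℂ}
    (hS : ∀ ρ, ρ ∈ S ↔ f ρ = 0 ∧ ρ ∈ closedBall s R) {z : ℂ} (hz : z ∈ ball s (R / 4))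
    (hfz : f z ≠ 0) :
    ‖taylorRemainder (logDeriv f) s z -
      ∑ ρ ∈ S, (analyticOrderNatAt f ρ : ℂ) * (z - s) ^ 2 / ((ρ - s) ^ 2 * (z - ρ))‖ ≤
      2 * (64 * M / R ^ 2) * ‖z - s‖ := by
  obtain ⟨g, hg, hgS, hfg⟩ := exists_eq_prod_pow_analyticOrderNatAt_mul hf hs S
  have hg_ne : ∀ w ∈ ball s R, g w ≠ 0 := fun w hw hgw =>
    hgS w ((hS w).mpr ⟨by rw [hfg, hgw, mul_zero], ball_subset_closedBall hw⟩) hgw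
  have hg_bound : ∀ w ∈ ball s R, ‖g w‖ ≤ Real.exp M * ‖g s‖ := fun w hw => by
    have hpow := two_pow_sum_mul_norm_le_of_eq_prod_mul hg hfg hR (fun ρ hρ => ((hS ρ).mp hρ).2)
      (fun w hw => hbound w (sphere_subset_closedBall hw))
      (ball_subset_closedBall (ball_subset_ball (by linarith) hw))
    refine le_of_mul_le_mul_left (a := ‖f s‖) ?_ (norm_pos_iff.mpr hs)
    refine le_trans ?_ (hpow.trans_eq (by ring))
    gcongr
    exact le_mul_of_one_le_left (norm_nonneg _) (one_le_pow₀ one_le_two)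
  have hlog : DifferentiableOn ℂ (logDeriv g) (ball s R) :=
    (hg.differentiableOn.deriv isOpen_ball).div hg.differentiableOn hg_ne
  have hnot_mem : ∀ {w}, f w ≠ 0 → w ∉ S := fun hw hwS => hw ((hS _).mp hwS).1
  have hg_of_f : ∀ {w}, f w ≠ 0 → g w ≠ 0 := fun {w} hw => right_ne_zero_of_mul (hfg w ▸ hw)
  have hsplit := taylorRemainder_logDeriv_prod_pow_mul (n := analyticOrderNatAt f) hg
    (hnot_mem hs) (hnot_mem hfz) (hg_of_f hs) (hg_of_f hfz)
  rw [← funext hfg] at hsplit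
  rw [hsplit, add_sub_cancel_left]
  exact norm_taylorRemainder_le (hlog.mono (ball_subset_ball (by linarith)))
    (fun w hw => norm_deriv_logDeriv_le_of_ne_zero_on_ball hR hM hg.differentiableOn hg_ne hg_bound
      hw) hz

theorem exists_le_norm_sub_zero {f : ℂ → ℂ} {s : ℂ} (hf : ContinuousAt f s) (hs : f s ≠ 0) :
    ∃ δ > 0, ∀ ρ, f ρ = 0 → δ ≤ ‖ρ - s‖ := by
  obtain ⟨δ, hδ, hball⟩ := Metric.eventually_nhds_iff_ball.mp (hf.eventually_ne hs)
  exact ⟨δ, hδ, fun ρ hρ => not_lt.mp fun h => hball ρ (mem_ball_iff_norm.mpr h) hρ⟩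

theorem summable_analyticOrderNatAt_div_sq {f : ℂ → ℂ} (hf : Differentiable ℂ f) {α : ℝ}
    (hgrowth : HasExpGrowthOn α f univ) (hα0 : 0 ≤ α) (hα : α < 2) {s : ℂ} (hs : f s ≠ 0) :
    Summable fun ρ : {ρ // f ρ = 0} => (analyticOrderNatAt f ρ : ℝ) / ‖(ρ : ℂ) - s‖ ^ 2 := by
  obtain ⟨δ, hδ, hdist⟩ := exists_le_norm_sub_zero hf.continuous.continuousAt hs
  obtain ⟨K, -, hK⟩ := hgrowth.exists_norm_le_exp_mul_norm hα0 hs hδ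
  have hcount : ∀ R ≥ δ, ∀ T : Finset {ρ // f ρ = 0}, (∀ ρ ∈ T, ‖(ρ : ℂ) - s‖ ≤ R) →
      ∑ ρ ∈ T, (analyticOrderNatAt f ρ : ℝ) ≤ 2 * K * R ^ α := fun R hR T hT => by
    have hsum := sum_analyticOrderNatAt_le hf hs (hδ.trans_le hR)
      (fun z hz => hK R hR z (sphere_subset_closedBall hz))
      (S := T.map (Function.Embedding.subtype _)) (by simpa [mem_closedBall, dist_eq_norm] using hT)
    rwa [Finset.sum_map, ← mul_assoc] at hsum
  refine (summable_mul_rpow_neg_of_sum_le hδ two_pos hα (fun _ => Nat.cast_nonneg _)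
    (fun ρ : {ρ // f ρ = 0} => hdist ρ ρ.2) hcount).congr fun ρ => ?_
  rw [Real.rpow_neg (norm_nonneg _), Real.rpow_two, div_eq_mul_inv]

theorem summable_taylorRemainder_logDeriv {f : ℂ → ℂ} (hf : Differentiable ℂ f) {α : ℝ}
    (hgrowth : HasExpGrowthOn α f univ) (hα0 : 0 ≤ α) (hα : α < 2) {s z : ℂ} (hs : f s ≠ 0)
    (hz : f z ≠ 0) :
    Summable fun ρ : {ρ // f ρ = 0} =>
      (analyticOrderNatAt f ρ : ℂ) * (z - s) ^ 2 / (((ρ : ℂ) - s) ^ 2 * (z - ρ)) := by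
  obtain ⟨δ, hδ, hdist⟩ := exists_le_norm_sub_zero hf.continuous.continuousAt hz
  refine Summable.of_norm_bounded
    ((summable_analyticOrderNatAt_div_sq hf hgrowth hα0 hα hs).mul_left (‖z - s‖ ^ 2 / δ))
    fun ρ => ?_
  have hρ := hdist ρ ρ.2
  rw [norm_sub_rev] at hρ
  calc ‖(analyticOrderNatAt f ρ : ℂ) * (z - s) ^ 2 / (((ρ : ℂ) - s) ^ 2 * (z - ρ))‖
      = ‖z - s‖ ^ 2 / ‖z - ρ‖ * (analyticOrderNatAt f ρ / ‖(ρ : ℂ) - s‖ ^ 2) := by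
        simp only [norm_div, norm_mul, norm_pow, norm_natCast]
        ring
    _ ≤ _ := by gcongr

theorem hasSum_taylorRemainder_logDeriv {f : ℂ → ℂ} (hf : Differentiable ℂ f) {α : ℝ}
    (hgrowth : HasExpGrowthOn α f univ) (hα0 : 0 ≤ α) (hα : α < 2) {s z : ℂ} (hs : f s ≠ 0)
    (hz : f z ≠ 0) :
    HasSum (fun ρ : {ρ // f ρ = 0} =>
      (analyticOrderNatAt f ρ : ℂ) * (z - s) ^ 2 / (((ρ : ℂ) - s) ^ 2 * (z - ρ)))
      (taylorRemainder (logDeriv f) s z) := by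
  set term : ℂ → ℂ := fun ρ =>
    (analyticOrderNatAt f ρ : ℂ) * (z - s) ^ 2 / ((ρ - s) ^ 2 * (z - ρ))
  have hsummable : Summable fun ρ : {ρ // f ρ = 0} => term ρ :=
    summable_taylorRemainder_logDeriv hf hgrowth hα0 hα hs hz
  let zeros : ℝ → Finset ℂ := fun R => (finite_zeros_inter_closedBall hf hs s R).toFinset
  have hmem : ∀ R ρ, ρ ∈ zeros R ↔ f ρ = 0 ∧ ρ ∈ closedBall s R := fun R ρ => by simp [zeros]
  have hexhaust : Tendsto (fun R => (zeros R).subtype (f · = 0)) atTop atTop := by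
    refine tendsto_atTop.mpr fun T => ?_
    filter_upwards [T.eventually_all.mpr fun ρ _ => eventually_ge_atTop (dist (ρ : ℂ) s)]
      with R hR ρ hρ
    simpa [hmem, ρ.2] using hR ρ hρ
  obtain ⟨K, hK0, hK⟩ := hgrowth.exists_norm_le_exp_mul_norm hα0 hs one_pos
  have hdecay : Tendsto (fun R : ℝ => 2 * (64 * (K * R ^ α) / R ^ 2) * ‖z - s‖) atTop (𝓝 0) := by
    have hpow := (tendsto_rpow_neg_atTop (sub_pos.mpr hα)).const_mul (2 * 64 * K * ‖z - s‖)
    rw [mul_zero] at hpow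
    refine hpow.congr' ?_
    filter_upwards [eventually_gt_atTop 0] with R hR
    rw [neg_sub, Real.rpow_sub hR, Real.rpow_two]
    ring
  have htendsto : Tendsto (fun R => ∑ ρ ∈ (zeros R).subtype (f · = 0), term ρ) atTop
      (𝓝 (taylorRemainder (logDeriv f) s z)) := by
    rw [tendsto_iff_norm_sub_tendsto_zero]
    refine squeeze_zero' (Eventually.of_forall fun _ => norm_nonneg _) ?_ hdecay
    filter_upwards [eventually_ge_atTop 1, eventually_gt_atTop (4 * ‖z - s‖)] with R hR hzR
    have hR0 : 0 < R := one_pos.trans_le hR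
    rw [norm_sub_rev, Finset.sum_subtype_of_mem term fun ρ hρ => ((hmem R ρ).mp hρ).1]
    exact norm_taylorRemainder_logDeriv_sub_sum_le hf hs hR0 (by positivity) (hK R hR) (hmem R)
      (mem_ball_iff_norm.mpr (by linarith)) hz
  exact tendsto_nhds_unique htendsto (hsummable.hasSum.comp hexhaust) ▸ hsummable.hasSum

end EntireFunctions

section ExpGrowth

variable {α : ℝ} {f g : ℂ → ℂ} {S T : Set ℂ}

theorem HasExpGrowthOn.mono (hf : HasExpGrowthOn α f T) (hST : S ⊆ T) : HasExpGrowthOn α f S :=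
  let ⟨C, hC, h⟩ := hf
  ⟨C, hC, fun z hz => h z (hST hz)⟩

theorem HasExpGrowthOn.congr (hf : HasExpGrowthOn α f S) (hfg : Set.EqOn f g S) :
    HasExpGrowthOn α g S :=
  let ⟨C, hC, h⟩ := hf
  ⟨C, hC, fun z hz => hfg hz ▸ h z hz⟩

theorem HasExpGrowthOn.union (hS : HasExpGrowthOn α f S) (hT : HasExpGrowthOn α f T) :
    HasExpGrowthOn α f (S ∪ T) := by
  obtain ⟨C, hC, hS⟩ := hS
  obtain ⟨D, -, hT⟩ := hT
  refine ⟨max C D, hC.trans (le_max_left C D), fun z hz => ?_⟩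
  rcases hz with hz | hz
  · refine (hS z hz).trans ?_
    gcongr
    exact le_max_left C D
  · refine (hT z hz).trans ?_
    gcongr
    exact le_max_right C D

theorem HasExpGrowthOn.mul (hf : HasExpGrowthOn α f S) (hg : HasExpGrowthOn α g S) :
    HasExpGrowthOn α (fun z => f z * g z) S := by
  obtain ⟨C, hC, hf⟩ := hf
  obtain ⟨D, hD, hg⟩ := hg
  refine ⟨C + D, by positivity, fun z hz => ?_⟩
  rw [norm_mul, add_mul, Real.exp_add]
  exact mul_le_mul (hf z hz) (hg z hz) (norm_nonneg _) (Real.exp_pos _).le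

theorem HasExpGrowthOn.add (hα : 0 ≤ α) (hf : HasExpGrowthOn α f S) (hg : HasExpGrowthOn α g S) :
    HasExpGrowthOn α (fun z => f z + g z) S := by
  obtain ⟨C, hC, hf⟩ := hf
  obtain ⟨D, hD, hg⟩ := hg
  refine ⟨1 + C + D, by positivity, fun z hz => ?_⟩
  set N := (1 + ‖z‖) ^ α
  have hN : 1 ≤ N := Real.one_le_rpow (by linarith [norm_nonneg z]) hα
  have htwo : 2 ≤ Real.exp N := by linarith [Real.add_one_le_exp N]
  calc ‖f z + g z‖ ≤ Real.exp (C * N) + Real.exp (D * N) :=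
        (norm_add_le _ _).trans (add_le_add (hf z hz) (hg z hz))
    _ ≤ Real.exp (C * N + D * N) + Real.exp (C * N + D * N) := by
        gcongr <;> nlinarith
    _ = 2 * Real.exp (C * N + D * N) := (two_mul _).symm
    _ ≤ Real.exp N * Real.exp (C * N + D * N) := by gcongr
    _ = Real.exp ((1 + C + D) * N) := by rw [← Real.exp_add]; ring_nf

theorem HasExpGrowthOn.comp_const_sub (hα : 0 ≤ α) (a : ℂ) (hf : HasExpGrowthOn α f S) :
    HasExpGrowthOn α (fun z => f (a - z)) ((a - ·) ⁻¹' S) := by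
  obtain ⟨C, hC, hf⟩ := hf
  refine ⟨C * (1 + ‖a‖) ^ α, by positivity, fun z hz => (hf _ hz).trans ?_⟩
  rw [mul_assoc, ← Real.mul_rpow (by positivity) (by positivity)]
  gcongr
  nlinarith [norm_sub_le a z, norm_nonneg a, norm_nonneg z]

theorem hasExpGrowthOn_of_norm_le_exp {a b : ℝ} (hα : 1 ≤ α) (ha : 0 ≤ a) (hb : 0 ≤ b)
    (hf : ∀ z ∈ S, ‖f z‖ ≤ Real.exp (a * ‖z‖ + b)) : HasExpGrowthOn α f S := by
  refine ⟨a + b, by positivity, fun z hz => (hf z hz).trans (Real.exp_le_exp.mpr ?_)⟩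
  have hN : 1 + ‖z‖ ≤ (1 + ‖z‖) ^ α :=
    Real.self_le_rpow_of_one_le (by linarith [norm_nonneg z]) hα
  nlinarith [norm_nonneg z]

theorem hasExpGrowthOn_of_norm_le_mul_norm {C : ℝ} (hα : 1 ≤ α)
    (hf : ∀ z ∈ S, ‖f z‖ ≤ C * ‖z‖) : HasExpGrowthOn α f S := by
  refine hasExpGrowthOn_of_norm_le_exp hα zero_le_one (abs_nonneg C) fun z hz => ?_
  calc ‖f z‖ ≤ |C| * ‖z‖ := (hf z hz).trans (by gcongr; exact le_abs_self C)
    _ ≤ Real.exp |C| * Real.exp ‖z‖ := by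
        gcongr
        · linarith [Real.add_one_le_exp |C|]
        · linarith [Real.add_one_le_exp ‖z‖]
    _ = Real.exp (1 * ‖z‖ + |C|) := by rw [← Real.exp_add, one_mul, add_comm]

theorem hasExpGrowthOn_cexp_affine (hα : 1 ≤ α) (a b : ℂ) :
    HasExpGrowthOn α (fun z => cexp (a * z + b)) S := by
  refine hasExpGrowthOn_of_norm_le_exp hα (norm_nonneg a) (norm_nonneg b) fun z _ => ?_
  rw [Complex.norm_exp, Real.exp_le_exp, ← norm_mul]
  exact (re_le_norm _).trans (norm_add_le _ _)

theorem hasExpGrowthOn_const_cpow_affine (hα : 1 ≤ α) {c : ℂ} (hc : c ≠ 0) (a b : ℂ) :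
    HasExpGrowthOn α (fun z => c ^ (a * z + b)) S :=
  (hasExpGrowthOn_cexp_affine hα (Complex.log c * a) (Complex.log c * b)).congr fun z _ => by
    simp only [cpow_def_of_ne_zero hc, mul_add, mul_assoc]

theorem norm_Gamma_le_Gamma_re {s : ℂ} (hs : 0 < s.re) : ‖Gamma s‖ ≤ Real.Gamma s.re := by
  rw [Gamma_eq_integral hs, Real.Gamma_eq_integral hs, GammaIntegral]
  refine (MeasureTheory.norm_integral_le_integral_norm _).trans_eq
    (MeasureTheory.setIntegral_congr_fun measurableSet_Ioi fun x hx => ?_)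
  simp only [norm_mul, norm_cpow_eq_rpow_re_of_pos hx, norm_real,
    Real.norm_of_nonneg (Real.exp_pos _).le, sub_re, one_re]

theorem factorial_le_exp_rpow (hα : 1 < α) (n : ℕ) :
    (n.factorial : ℝ) ≤ Real.exp ((n : ℝ) ^ α / (α - 1)) := by
  rcases n.eq_zero_or_pos with rfl | hn
  · simp [Real.zero_rpow (zero_lt_one.trans hα).ne']
  have hn' : (0 : ℝ) < n := by exact_mod_cast hn
  calc (n.factorial : ℝ) ≤ (n : ℝ) ^ n := by exact_mod_cast n.factorial_le_pow
    _ = Real.exp (n * Real.log n) := by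
        rw [mul_comm, Real.exp_mul, Real.exp_log hn', Real.rpow_natCast]
    _ ≤ Real.exp (n * ((n : ℝ) ^ (α - 1) / (α - 1))) := by
        gcongr
        exact Real.log_le_rpow_div hn'.le (sub_pos.mpr hα)
    _ = Real.exp ((n : ℝ) ^ α / (α - 1)) := by
        rw [← mul_div_assoc, ← Real.rpow_one_add' hn'.le (by linarith), add_sub_cancel]

theorem Gamma_le_factorial_div_sq {c σ : ℝ} (hc : 0 < c) (hσ : c ≤ σ) :
    Real.Gamma σ ≤ ((⌈σ⌉₊ + 1).factorial : ℝ) / c ^ 2 := by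
  have hσ0 : 0 < σ := hc.trans_le hσ
  have hceil := Nat.le_ceil σ
  have hrec : Real.Gamma (σ + 1 + 1) = (σ + 1) * (σ * Real.Gamma σ) := by
    rw [Real.Gamma_add_one (by positivity), Real.Gamma_add_one hσ0.ne']
  have hmono : Real.Gamma (σ + 1 + 1) ≤ (⌈σ⌉₊ + 1).factorial := by
    rw [← Real.Gamma_nat_eq_factorial]
    push_cast
    refine Real.Gamma_strictMonoOn_Ici.monotoneOn ?_ ?_ (by linarith) <;>
      simp only [Set.mem_Ici] <;> linarith
  rw [le_div_iff₀ (by positivity)]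
  refine le_trans ?_ (hrec ▸ hmono)
  have hsq : c ^ 2 ≤ (σ + 1) * σ := by nlinarith
  nlinarith [Real.Gamma_pos_of_pos hσ0]

theorem hasExpGrowthOn_Gamma (hα : 1 < α) {c : ℝ} (hc : 0 < c) :
    HasExpGrowthOn α Gamma {z | c ≤ z.re} := by
  refine ⟨|Real.log (c ^ 2)| + 3 ^ α / (α - 1), ?_, fun z (hz : c ≤ z.re) => ?_⟩
  · have := sub_pos.mpr hα
    positivity
  have hre : 0 < z.re := hc.trans_le hz
  have hN : 1 ≤ (1 + ‖z‖) ^ α := Real.one_le_rpow (by linarith [norm_nonneg z]) (by linarith)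
  have hceil : ((⌈z.re⌉₊ + 1 : ℕ) : ℝ) ≤ 3 * (1 + ‖z‖) := by
    push_cast
    linarith [Nat.ceil_lt_add_one hre.le, re_le_norm z, norm_nonneg z]
  calc ‖Gamma z‖ ≤ ((⌈z.re⌉₊ + 1).factorial : ℝ) / c ^ 2 :=
        (norm_Gamma_le_Gamma_re hre).trans (Gamma_le_factorial_div_sq hc hz)
    _ ≤ Real.exp ((3 * (1 + ‖z‖)) ^ α / (α - 1)) / c ^ 2 := by
        gcongr
        refine (factorial_le_exp_rpow hα _).trans (Real.exp_le_exp.mpr ?_)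
        gcongr
    _ = Real.exp (-Real.log (c ^ 2) + 3 ^ α / (α - 1) * (1 + ‖z‖) ^ α) := by
        rw [Real.exp_add, Real.exp_neg, Real.exp_log (by positivity),
          Real.mul_rpow (by norm_num) (by positivity)]
        ring_nf
    _ ≤ Real.exp ((|Real.log (c ^ 2)| + 3 ^ α / (α - 1)) * (1 + ‖z‖) ^ α) := by
        rw [add_mul]
        gcongr
        nlinarith [neg_le_abs (Real.log (c ^ 2)), abs_nonneg (Real.log (c ^ 2))]

end ExpGrowth

section PeriodicLFunction

open Topology Set MeasureTheory ZMod

theorem mellin_indicator_Ioi_one (B : ℝ → ℂ) (s : ℂ) :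
    mellin ((Ioi 1).indicator B) (-s) = ∫ t in Ioi (1 : ℝ), B t * (t : ℂ) ^ (-(s + 1)) := by
  have hintegrand : ∀ t : ℝ, (t : ℂ) ^ (-s - 1) • (Ioi 1).indicator B t =
      (Ioi 1).indicator (fun t => B t * (t : ℂ) ^ (-(s + 1))) t := fun t => by
    by_cases ht : t ∈ Ioi (1 : ℝ)
    · rw [indicator_of_mem ht, indicator_of_mem ht, smul_eq_mul, mul_comm, neg_add']
    · rw [indicator_of_notMem ht, indicator_of_notMem ht, smul_zero]
  simp only [mellin, hintegrand]
  rw [setIntegral_indicator measurableSet_Ioi, inter_eq_right.mpr (Ioi_subset_Ioi zero_le_one)]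

theorem differentiableAt_mellin_indicator_Ioi_one {B : ℝ → ℂ} (hB : Measurable B) {C : ℝ}
    (hC : ∀ t, ‖B t‖ ≤ C) {s : ℂ} (hs : s.re < 0) :
    DifferentiableAt ℂ (mellin ((Ioi 1).indicator B)) s := by
  have hbound : ∀ t, ‖(Ioi 1).indicator B t‖ ≤ C :=
    fun t => (norm_indicator_le_norm_self B t).trans (hC t)
  have hloc : LocallyIntegrable ((Ioi 1).indicator B) :=
    (locallyIntegrable_const C).mono (hB.indicator measurableSet_Ioi).aestronglyMeasurable
      (.of_forall fun t => (hbound t).trans (le_abs_self C))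
  refine mellin_differentiableAt_of_isBigO_rpow (a := 0) (b := s.re - 1)
    (hloc.locallyIntegrableOn _) ?_ hs ?_ (sub_one_lt _)
  · exact .of_bound C (.of_forall fun t => by simpa using hbound t)
  · refine .of_bound 0 ?_
    filter_upwards [Ioo_mem_nhdsGT (zero_lt_one (α := ℝ))] with t ht
    rw [indicator_of_notMem (notMem_Ioi.mpr ht.2.le), norm_zero, zero_mul]

theorem norm_integral_Ioi_one_mul_cpow_le {B : ℝ → ℂ} {C : ℝ} (hC : ∀ t, ‖B t‖ ≤ C) {s : ℂ}
    (hs : 0 < s.re) : ‖∫ t in Ioi (1 : ℝ), B t * (t : ℂ) ^ (-(s + 1))‖ ≤ C / s.re := by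
  have hlt : -(s.re + 1) < -1 := by linarith
  calc ‖∫ t in Ioi (1 : ℝ), B t * (t : ℂ) ^ (-(s + 1))‖
      ≤ ∫ t in Ioi (1 : ℝ), C * t ^ (-(s.re + 1)) := by
        refine norm_integral_le_of_norm_le
          ((integrableOn_Ioi_rpow_of_lt hlt zero_lt_one).const_mul C)
          ((ae_restrict_mem measurableSet_Ioi).mono fun t ht => ?_)
        rw [norm_mul, norm_cpow_eq_rpow_re_of_pos (zero_lt_one.trans ht), neg_re, add_re, one_re]
        exact mul_le_mul_of_nonneg_right (hC t) (Real.rpow_nonneg (zero_le_one.trans ht.le) _)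
    _ = C / s.re := by
        rw [integral_const_mul, integral_Ioi_rpow_of_lt hlt zero_lt_one, Real.one_rpow,
          neg_add, neg_add_cancel_right, neg_div_neg_eq, mul_one_div]

theorem LSeriesSummable_of_norm_sum_Icc_le {a : ℕ → ℂ} {C : ℝ}
    (hC : ∀ n, ‖∑ k ∈ Finset.Icc 1 n, a k‖ ≤ C) {s : ℂ} (hs : 1 < s.re) :
    LSeriesSummable a s := by
  refine LSeriesSummable_of_bounded_of_one_lt_re (m := C + C) (fun n hn => ?_) hs
  obtain ⟨k, rfl⟩ := Nat.exists_eq_succ_of_ne_zero hn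
  rw [← sub_eq_of_eq_add' (Finset.sum_Icc_succ_top (Nat.le_add_left 1 k) a)]
  exact (norm_sub_le _ _).trans (add_le_add (hC _) (hC _))

/-- Abel summation gives the integral representation `F s = s * ∫ t in Ioi 1, A t * t ^ (-s - 1)`,
where `A` is the summatory function of `a`, first for `1 < re s` and then, by analytic
continuation, for `0 < re s`. -/
theorem norm_le_of_eq_LSeries_of_norm_sum_Icc_le {a : ℕ → ℂ} {C : ℝ}
    (hC : ∀ n, ‖∑ k ∈ Finset.Icc 1 n, a k‖ ≤ C) {F : ℂ → ℂ}
    (hF : DifferentiableOn ℂ F {z | 0 < z.re}) (hFa : ∀ z : ℂ, 1 < z.re → F z = LSeries a z)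
    {s : ℂ} (hs : 0 < s.re) : ‖F s‖ ≤ C / s.re * ‖s‖ := by
  set A : ℝ → ℂ := fun t => ∑ k ∈ Finset.Icc 1 ⌊t⌋₊, a k
  have hA : Measurable A :=
    (measurable_from_top (f := fun n => ∑ k ∈ Finset.Icc 1 n, a k)).comp Nat.measurable_floor
  have hopen : IsOpen {z : ℂ | 0 < z.re} := isOpen_lt continuous_const continuous_re
  have hdiff : DifferentiableOn ℂ (fun z => z * mellin ((Ioi 1).indicator A) (-z))
      {z | 0 < z.re} := fun z (hz : 0 < z.re) =>
    (differentiableAt_id.mul ((differentiableAt_mellin_indicator_Ioi_one hA (fun t => hC _)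
      (by simpa using hz)).comp z differentiableAt_id.neg)).differentiableWithinAt
  have habel : ∀ z : ℂ, 1 < z.re → F z = z * mellin ((Ioi 1).indicator A) (-z) := fun z hz => by
    rw [hFa z hz, mellin_indicator_Ioi_one]
    exact LSeries_eq_mul_integral a le_rfl (zero_lt_one.trans hz)
      (LSeriesSummable_of_norm_sum_Icc_le hC hz)
      (.of_bound C (.of_forall fun n => by simpa using hC n))
  have hevent : F =ᶠ[𝓝 2] fun z => z * mellin ((Ioi 1).indicator A) (-z) := by
    filter_upwards [(isOpen_lt continuous_const continuous_re).mem_nhds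
      (show (1 : ℝ) < (2 : ℂ).re by simp)] with z hz using habel z hz
  rw [(hF.analyticOnNhd hopen).eqOn_of_preconnected_of_eventuallyEq (hdiff.analyticOnNhd hopen)
    (convex_halfSpace_re_gt 0).isPreconnected (by simp) hevent hs, norm_mul, mul_comm,
    mellin_indicator_Ioi_one]
  gcongr
  exact norm_integral_Ioi_one_mul_cpow_le (fun t => hC _) hs

variable {N : ℕ} [NeZero N]

theorem sum_range_natCast_zmod {M : Type*} [AddCommMonoid M] (Φ : ZMod N → M) :
    ∑ k ∈ Finset.range N, Φ k = ∑ j, Φ j :=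
  Finset.sum_bij (fun k _ => (k : ZMod N)) (fun _ _ => Finset.mem_univ _)
    (fun i hi j hj h => by
      rwa [natCast_eq_natCast_iff', Nat.mod_eq_of_lt (Finset.mem_range.mp hi),
        Nat.mod_eq_of_lt (Finset.mem_range.mp hj)] at h)
    (fun j _ => ⟨j.val, Finset.mem_range.mpr j.val_lt, natCast_zmod_val j⟩) fun _ _ => rfl

theorem norm_sum_range_natCast_zmod_le {E : Type*} [SeminormedAddCommGroup E] {Φ : ZMod N → E}
    (hΦ : ∑ j, Φ j = 0) (n : ℕ) : ‖∑ k ∈ Finset.range n, Φ k‖ ≤ ∑ j, ‖Φ j‖ := by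
  have hperiodic :
      Function.Periodic (fun n => ∑ k ∈ Finset.range n, Φ (k : ZMod N)) N := fun n => by
    simp only [add_comm n, Finset.sum_range_add, sum_range_natCast_zmod, hΦ, zero_add, Nat.cast_add,
      natCast_self]
  rw [← hperiodic.map_mod_nat n, ← sum_range_natCast_zmod fun j => ‖Φ j‖]
  exact (norm_sum_le _ _).trans (Finset.sum_le_sum_of_subset_of_nonneg
    (Finset.range_mono (n.mod_lt (NeZero.pos N)).le) fun _ _ _ => norm_nonneg _)

theorem norm_sum_Icc_natCast_zmod_le {E : Type*} [SeminormedAddCommGroup E] {Φ : ZMod N → E}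
    (hΦ : ∑ j, Φ j = 0) (n : ℕ) :
    ‖∑ k ∈ Finset.Icc 1 n, Φ k‖ ≤ (∑ j, ‖Φ j‖) + ‖Φ 0‖ := by
  have hsplit : ∑ k ∈ Finset.Icc 1 n, Φ k = ∑ k ∈ Finset.range (n + 1), Φ k - Φ 0 := by
    rw [Finset.range_eq_Ico, Finset.sum_eq_sum_Ico_succ_bot n.succ_pos, Nat.cast_zero,
      add_sub_cancel_left]
    rfl
  rw [hsplit]
  exact (norm_sub_le _ _).trans (by gcongr; exact norm_sum_range_natCast_zmod_le hΦ _)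

variable {Φ : ZMod N → ℂ}

theorem norm_zmodLFunction_le (hΦ : ∑ j, Φ j = 0) {s : ℂ} (hs : 0 < s.re) :
    ‖LFunction Φ s‖ ≤ ((∑ j, ‖Φ j‖) + ‖Φ 0‖) / s.re * ‖s‖ :=
  norm_le_of_eq_LSeries_of_norm_sum_Icc_le (norm_sum_Icc_natCast_zmod_le hΦ)
    (differentiable_LFunction_of_sum_zero hΦ).differentiableOn
    (fun _ hz => LFunction_eq_LSeries Φ hz) hs

theorem hasExpGrowthOn_zmodLFunction_halfPlane {α : ℝ} (hα : 1 ≤ α) (hΦ : ∑ j, Φ j = 0) {c : ℝ}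
    (hc : 0 < c) : HasExpGrowthOn α (LFunction Φ) {z | c ≤ z.re} := by
  refine hasExpGrowthOn_of_norm_le_mul_norm (C := ((∑ j, ‖Φ j‖) + ‖Φ 0‖) / c) hα
    fun z (hz : c ≤ z.re) => (norm_zmodLFunction_le hΦ (hc.trans_le hz)).trans ?_
  gcongr

theorem sum_dft_eq_zero (hΦ : Φ 0 = 0) : ∑ j, 𝓕 Φ j = 0 := by
  simp only [← dft_apply_zero, dft_dft, neg_zero, hΦ, smul_zero]

/-- The functional equation transports the polynomial bound on `1 / 2 ≤ re s` to the other half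
plane, where the Gamma factor is responsible for the growth. -/
theorem hasExpGrowthOn_zmodLFunction {α : ℝ} (hα : 1 < α) (hΦ : ∑ j, Φ j = 0) (hΦ0 : Φ 0 = 0) :
    HasExpGrowthOn α (LFunction Φ) univ := by
  have hΨ0 : Φ (-0) = 0 := by rw [neg_zero, hΦ0]
  have hhalf : (0 : ℝ) < 1 / 2 := by norm_num
  have htwo_pi : (2 * Real.pi : ℂ) ≠ 0 :=
    mul_ne_zero two_ne_zero (ofReal_ne_zero.mpr Real.pi_ne_zero)
  have hright : ∀ {Ψ : ZMod N → ℂ}, ∑ j, Ψ j = 0 →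
      HasExpGrowthOn α (LFunction Ψ) {z | 1 / 2 ≤ z.re} := fun hΨ =>
    hasExpGrowthOn_zmodLFunction_halfPlane hα.le hΨ hhalf
  have hreflected : HasExpGrowthOn α (fun s => LFunction Φ (1 - s)) {z | 1 / 2 ≤ z.re} := by
    refine HasExpGrowthOn.congr
      ((((hasExpGrowthOn_const_cpow_affine hα.le (NeZero.ne (N : ℂ)) 1 (-1)).mul
        (hasExpGrowthOn_const_cpow_affine hα.le htwo_pi (-1) 0)).mul
        (hasExpGrowthOn_Gamma hα hhalf)).mul
        (((hasExpGrowthOn_cexp_affine hα.le (Real.pi * I / 2) 0).mul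
          (hright (sum_dft_eq_zero hΦ0))).add (by linarith)
          ((hasExpGrowthOn_cexp_affine hα.le (-Real.pi * I / 2) 0).mul
          (hright (sum_dft_eq_zero (Φ := fun x => Φ (-x)) hΨ0))))) fun s (hs : 1 / 2 ≤ s.re) => ?_
    have hpole : ∀ n : ℕ, s ≠ -n := fun n h => by
      rw [h, neg_re, natCast_re] at hs
      linarith [n.cast_nonneg (α := ℝ)]
    rw [LFunction_one_sub Φ hpole (.inl hΦ0)]
    ring_nf
  refine ((hright hΦ).union
    ((hreflected.comp_const_sub (by linarith) 1).congr fun z _ => ?_)).mono fun z _ => ?_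
  · simp only [sub_sub_cancel]
  · simp only [mem_union, mem_ofPred_eq, mem_preimage, sub_re, one_re]
    exact (le_total (1 / 2) z.re).imp_right fun h => by linarith

theorem hasExpGrowthOn_dirichletLFunction {α : ℝ} (hα : 1 < α) {χ : DirichletCharacter ℂ N}
    (hχ : χ ≠ 1) : HasExpGrowthOn α (DirichletCharacter.LFunction χ) univ := by
  have hnontrivial : Nontrivial (ZMod N) := by
    by_contra h
    rw [not_nontrivial_iff_subsingleton] at h
    exact hχ (MulChar.ext' fun a => by rw [Subsingleton.elim a 1, map_one, map_one])
  exact hasExpGrowthOn_zmodLFunction hα (χ.sum_eq_zero_of_ne_one hχ) χ.map_zero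

end PeriodicLFunction

section TrivialZeros

open DirichletCharacter

theorem inv_Gammaℝ_mul_inv_Gammaℝ_two_sub (s : ℂ) :
    (Gammaℝ s)⁻¹ * (Gammaℝ (2 - s))⁻¹ = sin (Real.pi * s / 2) := by
  have hreflection := Gammaℝ_one_sub_mul_Gammaℝ_one_add (1 - s)
  rw [sub_sub_cancel, show 1 + (1 - s) = 2 - s by ring,
    show Real.pi * (1 - s) / 2 = Real.pi / 2 - Real.pi * s / 2 by ring, cos_pi_div_two_sub]
    at hreflection
  rw [← mul_inv, hreflection, inv_inv]

theorem analyticOrderAt_sin_pi_mul_div_two (n : ℕ) :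
    analyticOrderAt (fun s : ℂ => sin (Real.pi * s / 2)) (-2 * n) = 1 := by
  have harg : Real.pi * (-2 * n : ℂ) / 2 = -(n * Real.pi) := by ring
  have hderiv : HasDerivAt (fun s : ℂ => sin (Real.pi * s / 2))
      (cos (Real.pi * (-2 * n) / 2) * (Real.pi * 1 / 2)) (-2 * n) :=
    (((hasDerivAt_id _).const_mul _).div_const 2).csin
  refine AnalyticAt.analyticOrderAt_eq_one_of_zero_deriv_ne_zero ?_ ?_ ?_
  · exact (by fun_prop : Differentiable ℂ _).analyticAt _
  · rw [harg, sin_neg, sin_nat_mul_pi, neg_zero]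
  · rw [hderiv.deriv, harg, cos_neg, ← ofReal_natCast, ← ofReal_mul, ← ofReal_cos,
      Real.cos_nat_mul_pi]
    simp [Real.pi_ne_zero]

theorem analyticOrderAt_inv_Gammaℝ (n : ℕ) :
    analyticOrderAt (fun s => (Gammaℝ s)⁻¹) (-2 * n) = 1 := by
  have hreflected : Differentiable ℂ fun s => (Gammaℝ (2 - s))⁻¹ :=
    differentiable_Gammaℝ_inv.comp (differentiable_id.const_sub 2)
  have hne : (Gammaℝ (2 - -2 * n))⁻¹ ≠ 0 :=
    inv_ne_zero (Gammaℝ_ne_zero_of_re_pos (by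
      simp only [neg_mul, sub_neg_eq_add, add_re, re_ofNat, mul_re, natCast_re, im_ofNat,
        natCast_im, mul_zero, sub_zero]
      positivity))
  have horder := analyticOrderAt_mul (differentiable_Gammaℝ_inv.analyticAt (-2 * n))
    (hreflected.analyticAt (-2 * n))
  rw [(hreflected.analyticAt _).analyticOrderAt_eq_zero.mpr hne, add_zero] at horder
  rw [← horder, ← analyticOrderAt_sin_pi_mul_div_two n]
  exact congrArg (analyticOrderAt · _) (funext inv_Gammaℝ_mul_inv_Gammaℝ_two_sub)

variable {N : ℕ} [NeZero N] {χ : DirichletCharacter ℂ N} {s : ℂ}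

theorem completedLFunction_ne_zero_of_one_le_re (hχs : χ ≠ 1 ∨ s ≠ 1) (hs : 1 ≤ s.re) :
    completedLFunction χ s ≠ 0 := fun h =>
  LFunction_ne_zero_of_one_le_re χ hχs hs <| by
    rw [LFunction_eq_completed_div_gammaFactor χ s
      (.inl (ne_zero_of_re_pos (zero_lt_one.trans_le hs))), h, zero_div]

theorem rootNumber_ne_zero (hχ : χ.IsPrimitive) : rootNumber χ ≠ 0 := fun h => by
  have hfe := hχ.completedLFunction_one_sub (-1)
  rw [h, mul_zero, zero_mul] at hfe
  exact completedLFunction_ne_zero_of_one_le_re (.inr (by norm_num)) (by norm_num) hfe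

theorem completedLFunction_ne_zero_of_re_nonpos (hχ : χ.IsPrimitive) (hχ1 : χ ≠ 1)
    (hs : s.re ≤ 0) : completedLFunction χ s ≠ 0 := by
  have hfe := hχ.completedLFunction_one_sub (1 - s)
  rw [sub_sub_cancel] at hfe
  rw [hfe]
  refine mul_ne_zero (mul_ne_zero ?_ (rootNumber_ne_zero hχ))
    (completedLFunction_ne_zero_of_one_le_re (.inl (inv_ne_one.mpr hχ1)) (by simpa using hs))
  exact cpow_ne_zero_iff.mpr (.inl (NeZero.ne (N : ℂ)))

theorem LFunction_eq_completedLFunction_mul_inv_Gammaℝ (heven : χ.Even) (hχ1 : χ ≠ 1) :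
    LFunction χ = fun s => completedLFunction χ s * (Gammaℝ s)⁻¹ := by
  funext s
  rw [LFunction_eq_completed_div_gammaFactor χ s (.inr fun h => hχ1 (level_one' χ h)),
    heven.gammaFactor_def, div_eq_mul_inv]

theorem exists_eq_neg_two_mul_of_LFunction_eq_zero (hχ : χ.IsPrimitive) (heven : χ.Even)
    (hχ1 : χ ≠ 1) (hs : s.re ≤ 0) (hzero : LFunction χ s = 0) : ∃ n : ℕ, s = -2 * n := by
  rw [LFunction_eq_completedLFunction_mul_inv_Gammaℝ heven hχ1, mul_eq_zero,
    or_iff_right (completedLFunction_ne_zero_of_re_nonpos hχ hχ1 hs), inv_eq_zero,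
    Gammaℝ_eq_zero_iff] at hzero
  simpa only [neg_mul] using hzero

theorem analyticOrderAt_LFunction_neg_two_mul (hχ : χ.IsPrimitive) (heven : χ.Even) (hχ1 : χ ≠ 1)
    (n : ℕ) : analyticOrderAt (LFunction χ) (-2 * n) = 1 := by
  have hcompleted := (differentiable_completedLFunction hχ1).analyticAt (-2 * n)
  have hre : (-2 * n : ℂ).re ≤ 0 := by simp
  rw [LFunction_eq_completedLFunction_mul_inv_Gammaℝ heven hχ1]
  refine (analyticOrderAt_mul hcompleted (differentiable_Gammaℝ_inv.analyticAt _)).trans ?_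
  rw [hcompleted.analyticOrderAt_eq_zero.mpr (completedLFunction_ne_zero_of_re_nonpos hχ hχ1 hre),
    analyticOrderAt_inv_Gammaℝ, zero_add]

theorem LFunction_neg_two_mul_eq_zero (hχ : χ.IsPrimitive) (heven : χ.Even) (hχ1 : χ ≠ 1)
    (n : ℕ) : LFunction χ (-2 * n) = 0 :=
  apply_eq_zero_of_analyticOrderAt_ne_zero
    (analyticOrderAt_LFunction_neg_two_mul hχ heven hχ1 n ▸ one_ne_zero)

end TrivialZeros

section LaplaceTransform

open Set MeasureTheory

/-- `F` is the Laplace transform on the half-plane `σ < re w` of the continuous function `D` on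
`(0, ∞)`, which satisfies `‖D u‖ ≤ M * exp (σ * u)`. The constant `M` is part of the notion so
that series of transforms can be summed. -/
structure HasLaplaceTransform (D : ℝ → ℂ) (σ M : ℝ) (F : ℂ → ℂ) : Prop where
  continuousOn : ContinuousOn D (Ioi 0)
  norm_le : ∀ u, 0 < u → ‖D u‖ ≤ M * Real.exp (σ * u)
  integral_eq : ∀ w : ℂ, σ < w.re → ∫ u in Ioi (0 : ℝ), cexp (-w * u) * D u = F w

theorem norm_exp_neg_mul_mul_le {d w : ℂ} {M σ u : ℝ} (hd : ‖d‖ ≤ M * Real.exp (σ * u)) :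
    ‖cexp (-w * u) * d‖ ≤ M * Real.exp ((σ - w.re) * u) := by
  have hexp : ‖cexp (-w * u)‖ = Real.exp (-w.re * u) := by simp [norm_exp]
  calc ‖cexp (-w * u) * d‖ ≤ Real.exp (-w.re * u) * (M * Real.exp (σ * u)) := by
        rw [norm_mul, hexp]
        gcongr
    _ = M * Real.exp ((σ - w.re) * u) := by
        rw [mul_left_comm, ← Real.exp_add]
        ring_nf

theorem integrableOn_exp_neg_mul_mul {D : ℝ → ℂ} {σ M : ℝ} {w : ℂ} (hD : ContinuousOn D (Ioi 0))
    (hbound : ∀ u, 0 < u → ‖D u‖ ≤ M * Real.exp (σ * u)) (hw : σ < w.re) :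
    IntegrableOn (fun u : ℝ => cexp (-w * u) * D u) (Ioi 0) := by
  refine Integrable.mono' ((integrableOn_exp_mul_Ioi (sub_neg.mpr hw) 0).const_mul M) ?_ ?_
  · exact ((by fun_prop : Continuous fun u : ℝ => cexp (-w * u)).continuousOn.mul hD)
      |>.aestronglyMeasurable measurableSet_Ioi
  · exact (ae_restrict_mem measurableSet_Ioi).mono fun u hu =>
      norm_exp_neg_mul_mul_le (hbound u hu)

theorem norm_max_sub_zero_le {σ : ℝ} (hσ : 0 < σ) (l u : ℝ) :
    ‖(max (u - l) 0 : ℝ)‖ ≤ Real.exp (-σ * l) / σ * Real.exp (σ * u) := by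
  have hexp := Real.add_one_le_exp (σ * (u - l))
  rw [Real.norm_of_nonneg (le_max_right _ _), div_mul_eq_mul_div, ← Real.exp_add,
    show -σ * l + σ * u = σ * (u - l) by ring, le_div_iff₀ hσ, max_mul_of_nonneg _ _ hσ.le,
    zero_mul]
  exact max_le (by linarith) (Real.exp_pos _).le

theorem integral_Ioi_exp_neg_mul_mul_max_sub_zero {l : ℝ} {w : ℂ} (hl : 0 ≤ l) (hw : 0 < w.re) :
    ∫ u in Ioi (0 : ℝ), cexp (-w * u) * (max (u - l) 0 : ℝ) = cexp (-w * l) / w ^ 2 := by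
  have hw0 : w ≠ 0 := ne_zero_of_re_pos hw
  have hsubset : Ioi l ⊆ Ioi (0 : ℝ) := Ioi_subset_Ioi hl
  have hmax : EqOn (fun u : ℝ => cexp (-w * u) * (max (u - l) 0 : ℝ))
      (fun u : ℝ => cexp (-w * u) * (u - l)) (Ioi l) := fun u hu => by
    simp only [max_eq_left (sub_nonneg.mpr (mem_Ioi.mp hu).le), ofReal_sub]
  have hexp : IntegrableOn (fun u : ℝ => cexp (-w * u)) (Ioi l) :=
    integrableOn_exp_mul_complex_Ioi (by simpa using hw) l
  have hint : IntegrableOn (fun u : ℝ => cexp (-w * u) * (u - l)) (Ioi l) :=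
    ((integrableOn_exp_neg_mul_mul (D := fun u => (max (u - l) 0 : ℝ)) (by fun_prop)
      (fun u _ => (norm_real _).trans_le (norm_max_sub_zero_le (half_pos hw) l u))
      (half_lt_self hw)).mono_set hsubset).congr_fun hmax measurableSet_Ioi
  have hderiv : ∀ u ∈ Ici l, HasDerivAt
      (fun u : ℝ => -1 / w * (cexp (-w * u) * (u - l)) + -1 / w ^ 2 * cexp (-w * u))
      (cexp (-w * u) * (u - l)) u := fun u _ => by
    have hlinear := (hasDerivAt_id u).ofReal_comp.const_mul (-w)
    refine (((hlinear.cexp.mul ((hasDerivAt_id u).ofReal_comp.sub_const (l : ℂ))).const_mul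
      (-1 / w)).add (hlinear.cexp.const_mul (-1 / w ^ 2))).congr_deriv ?_
    simp only [id_eq, ofReal_one]
    field_simp
    ring
  have hlim := tendsto_zero_of_hasDerivAt_of_integrableOn_Ioi
    (fun u hu => hderiv u (Ioi_subset_Ici_self hu)) hint
    ((hint.const_mul (-1 / w)).add (hexp.const_mul (-1 / w ^ 2)))
  calc ∫ u in Ioi (0 : ℝ), cexp (-w * u) * (max (u - l) 0 : ℝ)
      = ∫ u in Ioi l, cexp (-w * u) * (max (u - l) 0 : ℝ) := by
        refine setIntegral_eq_of_subset_of_forall_sdiff_eq_zero measurableSet_Ioi hsubset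
          fun u hu => ?_
        rw [max_eq_right (sub_nonpos.mpr (notMem_Ioi.mp hu.2)), ofReal_zero, mul_zero]
    _ = ∫ u in Ioi l, cexp (-w * u) * (u - l) := setIntegral_congr_fun measurableSet_Ioi hmax
    _ = cexp (-w * l) / w ^ 2 := by
        rw [integral_Ioi_of_hasDerivAt_of_tendsto' hderiv hint hlim]
        ring

namespace HasLaplaceTransform

variable {D D₁ D₂ : ℝ → ℂ} {σ M M₁ M₂ : ℝ} {F F₁ F₂ : ℂ → ℂ} {w : ℂ}

theorem integrableOn (h : HasLaplaceTransform D σ M F) (hw : σ < w.re) :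
    IntegrableOn (fun u : ℝ => cexp (-w * u) * D u) (Ioi 0) :=
  integrableOn_exp_neg_mul_mul h.continuousOn h.norm_le hw

theorem add (h₁ : HasLaplaceTransform D₁ σ M₁ F₁) (h₂ : HasLaplaceTransform D₂ σ M₂ F₂) :
    HasLaplaceTransform (fun u => D₁ u + D₂ u) σ (M₁ + M₂) (fun w => F₁ w + F₂ w) where
  continuousOn := h₁.continuousOn.add h₂.continuousOn
  norm_le u hu := by
    rw [add_mul]
    exact norm_add_le_of_le (h₁.norm_le u hu) (h₂.norm_le u hu)
  integral_eq w hw := by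
    simp only [mul_add]
    rw [integral_add (h₁.integrableOn hw) (h₂.integrableOn hw), h₁.integral_eq w hw,
      h₂.integral_eq w hw]

theorem const_mul (c : ℂ) (h : HasLaplaceTransform D σ M F) :
    HasLaplaceTransform (fun u => c * D u) σ (‖c‖ * M) (fun w => c * F w) where
  continuousOn := continuousOn_const.mul h.continuousOn
  norm_le u hu := by
    rw [norm_mul, mul_assoc]
    gcongr
    exact h.norm_le u hu
  integral_eq w hw := by
    simp only [mul_left_comm _ c]
    rw [integral_const_mul, h.integral_eq w hw]

theorem congr {G : ℂ → ℂ} (h : HasLaplaceTransform D σ M F) (hFG : ∀ w : ℂ, σ < w.re → F w = G w) :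
    HasLaplaceTransform D σ M G where
  __ := h
  integral_eq w hw := (h.integral_eq w hw).trans (hFG w hw)

theorem summable {ι : Type*} {D : ι → ℝ → ℂ} {M : ι → ℝ} {F : ι → ℂ → ℂ}
    (h : ∀ i, HasLaplaceTransform (D i) σ (M i) (F i)) (hM : Summable M) {u : ℝ} (hu : 0 < u) :
    Summable fun i => D i u :=
  .of_norm_bounded (hM.mul_right _) fun i => (h i).norm_le u hu

theorem tsum {ι : Type*} [Countable ι] {D : ι → ℝ → ℂ} {M : ι → ℝ} {F : ι → ℂ → ℂ} (hσ : 0 ≤ σ)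
    (h : ∀ i, HasLaplaceTransform (D i) σ (M i) (F i)) (hM : Summable M) :
    HasLaplaceTransform (fun u => ∑' i, D i u) σ (∑' i, M i) (fun w => ∑' i, F i w) where
  continuousOn u hu := by
    have hM0 : ∀ i, 0 ≤ M i := fun i => nonneg_of_mul_nonneg_left
      ((norm_nonneg _).trans ((h i).norm_le u hu)) (Real.exp_pos _)
    have hcont : ContinuousOn (fun v => ∑' i, D i v) (Ioo 0 (u + 1)) := by
      refine continuousOn_tsum (fun i => (h i).continuousOn.mono Ioo_subset_Ioi_self)
        (hM.mul_right (Real.exp (σ * (u + 1)))) fun i v hv => ((h i).norm_le v hv.1).trans ?_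
      have := hM0 i
      have := hv.2.le
      gcongr
    exact (hcont.continuousAt (Ioo_mem_nhds hu (lt_add_one u))).continuousWithinAt
  norm_le u hu := tsum_of_norm_bounded (hM.hasSum.mul_right _) fun i => (h i).norm_le u hu
  integral_eq w hw := by
    have hint := fun i => (h i).integrableOn hw
    have hnorm : ∀ i, ∫ u in Ioi (0 : ℝ), ‖cexp (-w * u) * D i u‖ ≤
        M i * ∫ u in Ioi (0 : ℝ), Real.exp ((σ - w.re) * u) := fun i => by
      rw [← integral_const_mul]
      exact setIntegral_mono_on (hint i).norm
        ((integrableOn_exp_mul_Ioi (sub_neg.mpr hw) 0).const_mul _) measurableSet_Ioi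
        fun u hu => norm_exp_neg_mul_mul_le ((h i).norm_le u hu)
    have hsum := hasSum_integral_of_summable_integral_norm hint <|
      (hM.mul_right _).of_nonneg_of_le (fun i => integral_nonneg fun _ => norm_nonneg _) hnorm
    simp only [tsum_mul_left] at hsum
    rw [← hsum.tsum_eq]
    exact tsum_congr fun i => (h i).integral_eq w hw

theorem exp {r : ℂ} (hr : r.re ≤ σ) :
    HasLaplaceTransform (fun u => cexp (r * u)) σ 1 (fun w => 1 / (w - r)) where
  continuousOn := by fun_prop
  norm_le u hu := by
    rw [norm_exp, one_mul, re_mul_ofReal]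
    gcongr
  integral_eq w hw := by
    simp only [← exp_add, ← add_mul]
    rw [integral_exp_mul_complex_Ioi (by simp; linarith) 0, ofReal_zero, mul_zero, exp_zero,
      neg_div, ← div_neg, neg_add', neg_neg]

theorem max_sub_zero (hσ : 0 < σ) {l : ℝ} (hl : 0 ≤ l) :
    HasLaplaceTransform (fun u => (max (u - l) 0 : ℝ)) σ (Real.exp (-σ * l) / σ)
      (fun w => cexp (-w * l) / w ^ 2) where
  continuousOn := by fun_prop
  norm_le u _ := (norm_real _).trans_le (norm_max_sub_zero_le hσ l u)
  integral_eq _ hw := integral_Ioi_exp_neg_mul_mul_max_sub_zero hl (hσ.trans hw)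

open FourierTransform in
/-- Along a vertical line the Laplace transform is a Fourier transform, so this is Fourier
inversion. -/
theorem eq_zero (h : HasLaplaceTransform D σ M F) (hF : ∀ w : ℂ, σ < w.re → F w = 0) {u : ℝ}
    (hu : 0 < u) : D u = 0 := by
  set c : ℝ := σ + 1 with hc
  set E : ℝ → ℂ := (Ioi 0).indicator fun u => cexp (-(c : ℂ) * u) * D u with hE
  have hintegrable : Integrable E :=
    (integrable_indicator_iff measurableSet_Ioi).mpr (h.integrableOn (by simp [hc]))
  have hfourier : 𝓕 E = 0 := by
    ext ξ
    have hre : σ < (c + 2 * Real.pi * ξ * I : ℂ).re := by simp [hc]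
    rw [Real.fourier_real_eq_integral_exp_smul, Pi.zero_apply, ← hF _ hre, ← h.integral_eq _ hre,
      ← integral_indicator measurableSet_Ioi]
    congr 1 with v
    have hexp : cexp (↑(-2 * Real.pi * v * ξ) * I) * cexp (-(c : ℂ) * v) =
        cexp (-(c + 2 * Real.pi * ξ * I) * v) := by
      rw [← exp_add]
      push_cast
      ring_nf
    simp only [hE, indicator, smul_eq_mul, mul_ite, mul_zero, ← mul_assoc, hexp]
  have hcont : ContinuousAt E u := by
    refine ContinuousAt.congr (f := fun u : ℝ => cexp (-(c : ℂ) * u) * D u) ?_ ?_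
    · exact ContinuousAt.mul (by fun_prop) (h.continuousOn.continuousAt (Ioi_mem_nhds hu))
    · exact (eqOn_indicator.symm).eventuallyEq_of_mem (Ioi_mem_nhds hu)
  have hinversion := hintegrable.fourierInv_fourier_eq (hfourier ▸ integrable_zero _ _ _) hcont
  rw [hfourier, Real.fourierInv_eq', hE, indicator_of_mem (mem_Ioi.mpr hu)] at hinversion
  simpa using hinversion.symm

end HasLaplaceTransform

end LaplaceTransform

section ExplicitFormula

open Set Metric DirichletCharacter ArithmeticFunction

theorem countable_zeros {f : ℂ → ℂ} (hf : Differentiable ℂ f) {s : ℂ} (hs : f s ≠ 0) :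
    Countable {ρ // f ρ = 0} := by
  have hunion : {z | f z = 0} = ⋃ n : ℕ, {z | f z = 0} ∩ closedBall s n := by
    rw [← inter_iUnion, iUnion_closedBall_nat, inter_univ]
  have hcountable : {z | f z = 0}.Countable := by
    rw [hunion]
    exact countable_iUnion fun n => (finite_zeros_inter_closedBall hf hs s n).countable
  exact hcountable.to_subtype

theorem hasLaplaceTransform_exp_zero (f : ℂ → ℂ) {ρ s : ℂ} {σ : ℝ} (hρ : (ρ - s).re ≤ σ) :
    HasLaplaceTransform (fun u => analyticOrderNatAt f ρ / (ρ - s) ^ 2 * cexp ((ρ - s) * u)) σ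
      (analyticOrderNatAt f ρ / ‖ρ - s‖ ^ 2)
      (fun w => analyticOrderNatAt f ρ / (ρ - s) ^ 2 * (1 / (w - (ρ - s)))) := by
  have h := (HasLaplaceTransform.exp hρ).const_mul (analyticOrderNatAt f ρ / (ρ - s) ^ 2)
  rwa [mul_one, norm_div, norm_natCast, norm_pow] at h

theorem hasLaplaceTransform_tsum_exp_zeros {f : ℂ → ℂ} (hf : Differentiable ℂ f) {α σ : ℝ}
    (hgrowth : HasExpGrowthOn α f univ) (hα0 : 0 ≤ α) (hα : α < 2) {s : ℂ} (hs : f s ≠ 0)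
    (hσ : 0 ≤ σ) (hzeros : ∀ ρ, f ρ = 0 → (ρ - s).re ≤ σ) :
    HasLaplaceTransform
      (fun u => ∑' ρ : {ρ // f ρ = 0},
        analyticOrderNatAt f ρ / ((ρ : ℂ) - s) ^ 2 * cexp ((ρ - s) * u)) σ
      (∑' ρ : {ρ // f ρ = 0}, analyticOrderNatAt f ρ / ‖(ρ : ℂ) - s‖ ^ 2)
      (fun w => taylorRemainder (logDeriv f) s (s + w) / w ^ 2) := by
  have := countable_zeros hf hs
  refine (HasLaplaceTransform.tsum hσ
    (fun ρ : {ρ // f ρ = 0} => hasLaplaceTransform_exp_zero f (hzeros ρ ρ.2))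
    (summable_analyticOrderNatAt_div_sq hf hgrowth hα0 hα hs)).congr fun w hw => ?_
  have hw0 : w ≠ 0 := ne_zero_of_re_pos (hσ.trans_lt hw)
  have hz : f (s + w) ≠ 0 := fun h => hw.not_ge (by simpa using hzeros _ h)
  rw [← (hasSum_taylorRemainder_logDeriv hf hgrowth hα0 hα hs hz).tsum_eq, ← tsum_div_const]
  refine tsum_congr fun ρ => ?_
  rw [add_sub_cancel_left, sub_sub_eq_add_sub, add_comm w]
  field_simp

variable {N : ℕ} {χ : DirichletCharacter ℂ N} {s : ℂ}

/-- The coefficient of `n ^ (-w)` in the Dirichlet series of `-L'/L(s + w, χ)`. -/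
noncomputable def twistedVonMangoldt (χ : DirichletCharacter ℂ N) (s : ℂ) (n : ℕ) : ℂ :=
  (vonMangoldt n : ℂ) * χ n * (n : ℂ) ^ (-s)

theorem twistedVonMangoldt_mul_exp (χ : DirichletCharacter ℂ N) (s w : ℂ) (n : ℕ) :
    twistedVonMangoldt χ s n * cexp (-w * Real.log n) =
      LSeries.term ((fun n : ℕ => χ n) * fun n : ℕ => (vonMangoldt n : ℂ)) (s + w) n := by
  rcases eq_or_ne n 0 with rfl | hn
  · simp [twistedVonMangoldt]
  have hn' : (n : ℂ) ≠ 0 := Nat.cast_ne_zero.mpr hn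
  rw [LSeries.term_of_ne_zero hn, div_eq_mul_inv, ← cpow_neg, neg_add, cpow_add _ _ hn',
    cpow_def_of_ne_zero hn' (-w), natCast_log, twistedVonMangoldt, Pi.mul_apply]
  ring_nf

theorem tsum_twistedVonMangoldt_mul_max_eq_sum {x : ℝ} (hx : 0 < x) :
    ∑' n : ℕ, twistedVonMangoldt χ s n * (max (Real.log x - Real.log n) 0 : ℝ) =
      ∑ n ∈ Finset.Icc 2 ⌊x⌋₊, twistedVonMangoldt χ s n * Real.log (x / n) := by
  rw [tsum_eq_sum (s := Finset.Icc 2 ⌊x⌋₊)]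
  · refine Finset.sum_congr rfl fun n hn => ?_
    obtain ⟨hn2, hnx⟩ := Finset.mem_Icc.mp hn
    have hn0 : (0 : ℝ) < n := by positivity
    rw [← Real.log_div hx.ne' hn0.ne', max_eq_left]
    exact Real.log_nonneg ((one_le_div hn0).mpr ((Nat.le_floor_iff hx.le).mp hnx))
  · intro n hn
    rw [Finset.mem_Icc, not_and, not_le, Nat.floor_lt hx.le] at hn
    rcases lt_or_ge n 2 with hn2 | hn2
    · interval_cases n <;> simp [twistedVonMangoldt]
    · rw [max_eq_right (sub_nonpos.mpr (Real.log_le_log hx (hn hn2).le)), ofReal_zero, mul_zero]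

variable [NeZero N]

theorem tsum_twistedVonMangoldt_mul_exp {w : ℂ} (hw : 1 < (s + w).re) :
    ∑' n, twistedVonMangoldt χ s n * cexp (-w * Real.log n) = -logDeriv (LFunction χ) (s + w) := by
  simp only [twistedVonMangoldt_mul_exp]
  rw [← LSeries, LSeries_twist_vonMangoldt_eq χ hw, ← deriv_LFunction_eq_deriv_LSeries χ hw,
    ← LFunction_eq_LSeries χ hw, logDeriv_apply, neg_div]

theorem hasLaplaceTransform_tsum_twistedVonMangoldt {σ : ℝ} (hσ : 0 < σ) (hs : 1 < s.re + σ) :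
    HasLaplaceTransform
      (fun u => ∑' n : ℕ, twistedVonMangoldt χ s n * (max (u - Real.log n) 0 : ℝ)) σ
      (∑' n : ℕ, ‖twistedVonMangoldt χ s n‖ * (Real.exp (-σ * Real.log n) / σ))
      (fun w => -logDeriv (LFunction χ) (s + w) / w ^ 2) := by
  have hsummable : Summable fun n : ℕ =>
      ‖twistedVonMangoldt χ s n‖ * (Real.exp (-σ * Real.log n) / σ) := by
    refine ((LSeriesSummable_twist_vonMangoldt χ (s := s + σ) (by simpa using hs)).norm.div_const
      σ).congr fun n => ?_
    rw [← twistedVonMangoldt_mul_exp, norm_mul, ← mul_div_assoc, ← ofReal_neg, ← ofReal_mul,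
      norm_exp_ofReal]
  refine (HasLaplaceTransform.tsum hσ.le (fun n : ℕ =>
    (HasLaplaceTransform.max_sub_zero hσ (Real.log_natCast_nonneg n)).const_mul
      (twistedVonMangoldt χ s n)) hsummable).congr fun w hw => ?_
  have hre : 1 < (s + w).re := by
    rw [add_re]
    linarith
  simp only [← tsum_twistedVonMangoldt_mul_exp hre, ← mul_div_assoc, tsum_div_const]

theorem hasSum_exp_zeros (hχ : χ ≠ 1) (hs : LFunction χ s ≠ 0) {u : ℝ} (hu : 0 < u) :
    HasSum (fun ρ : {ρ // LFunction χ ρ = 0} =>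
      analyticOrderNatAt (LFunction χ) ρ / ((ρ : ℂ) - s) ^ 2 * cexp ((ρ - s) * u))
      (-(logDeriv (LFunction χ) s * u) -
        ∑' n : ℕ, twistedVonMangoldt χ s n * (max (u - Real.log n) 0 : ℝ) -
        deriv (logDeriv (LFunction χ)) s) := by
  have hL := differentiable_LFunction hχ
  have hgrowth : HasExpGrowthOn (3 / 2) (LFunction χ) univ :=
    hasExpGrowthOn_dirichletLFunction (by norm_num) hχ
  obtain ⟨σ, hσ, hsσ⟩ : ∃ σ : ℝ, 0 < σ ∧ 1 < s.re + σ :=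
    ⟨|1 - s.re| + 1, by positivity, by linarith [le_abs_self (1 - s.re)]⟩
  have hzeros : ∀ ρ, LFunction χ ρ = 0 → (ρ - s).re ≤ σ := fun ρ hρ => by
    by_contra! hlt
    rw [sub_re] at hlt
    exact LFunction_ne_zero_of_one_le_re χ (.inl hχ) (by linarith) hρ
  have hsummable := HasLaplaceTransform.summable
    (fun ρ : {ρ // LFunction χ ρ = 0} => hasLaplaceTransform_exp_zero _ (hzeros ρ ρ.2))
    (summable_analyticOrderNatAt_div_sq hL hgrowth (by norm_num) (by norm_num) hs) hu
  have hlinear := (HasLaplaceTransform.max_sub_zero hσ le_rfl).const_mul (logDeriv (LFunction χ) s)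
  have hconst := (HasLaplaceTransform.exp (r := 0) hσ.le).const_mul
    (deriv (logDeriv (LFunction χ)) s)
  have hprimes := hasLaplaceTransform_tsum_twistedVonMangoldt (χ := χ) hσ hsσ
  have hexps := hasLaplaceTransform_tsum_exp_zeros hL hgrowth (by norm_num) (by norm_num) hs hσ.le
    hzeros
  have hzero := (((hlinear.add hprimes).add hconst).add hexps).eq_zero (fun w hw => ?_) hu
  · convert hsummable.hasSum
    simp only [sub_zero, max_eq_left hu.le, zero_mul, exp_zero, mul_one] at hzero
    linear_combination -hzero
  · have hw0 : w ≠ 0 := ne_zero_of_re_pos (hσ.trans hw)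
    simp only [taylorRemainder, ofReal_zero, mul_zero, exp_zero, sub_zero, add_sub_cancel_left]
    field_simp
    ring

theorem tsum_LFunction_zeros_eq_add (hχ : χ.IsPrimitive) (heven : χ.Even) (hχ1 : χ ≠ 1)
    {g : ℂ → ℂ} (hg : Summable fun ρ : {ρ // LFunction χ ρ = 0} => g ρ) :
    ∑' ρ : {ρ // LFunction χ ρ = 0}, g ρ =
      ∑' ρ : {ρ // LFunction χ ρ = 0 ∧ 0 < ρ.re ∧ ρ.re < 1}, g ρ + ∑' k : ℕ, g (-2 * k) := by
  set critical : Set ℂ := {ρ | LFunction χ ρ = 0 ∧ 0 < ρ.re ∧ ρ.re < 1}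
  have htrivial_injective : Function.Injective fun k : ℕ => (-2 * k : ℂ) := fun k l h => by
    simpa using h
  have hunion : {ρ | LFunction χ ρ = 0} = critical ∪ range fun k : ℕ => (-2 * k : ℂ) := by
    refine Subset.antisymm (fun ρ hρ => ?_) (union_subset (fun ρ hρ => hρ.1) ?_)
    · rcases le_or_gt ρ.re 0 with hre | hre
      · obtain ⟨k, rfl⟩ := exists_eq_neg_two_mul_of_LFunction_eq_zero hχ heven hχ1 hre hρ
        exact .inr ⟨k, rfl⟩
      · exact .inl ⟨hρ, hre, not_le.mp fun h => LFunction_ne_zero_of_one_le_re χ (.inl hχ1) h hρ⟩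
    · rintro _ ⟨k, rfl⟩
      exact LFunction_neg_two_mul_eq_zero hχ heven hχ1 k
  have hdisjoint : Disjoint critical (range fun k : ℕ => (-2 * k : ℂ)) := by
    refine Set.disjoint_left.mpr ?_
    rintro _ ⟨-, hre, -⟩ ⟨k, rfl⟩
    exact hre.not_ge (by simp)
  replace hg : Summable fun ρ : ↑{ρ | LFunction χ ρ = 0} => g ρ := hg
  rw [hunion] at hg
  change ∑' ρ : ↑{ρ | LFunction χ ρ = 0}, g ρ = ∑' ρ : critical, g ρ + _
  rw [hunion, Summable.tsum_union_disjoint hdisjoint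
    (hg.comp_injective (inclusion_injective subset_union_left))
    (hg.comp_injective (inclusion_injective subset_union_right)),
    tsum_range g htrivial_injective]

theorem analyticOrderNatAt_eq_of_eventually_eq {f : ℂ → ℂ} {ρ : ℂ} (hf : AnalyticAt ℂ f ρ) {n : ℕ}
    (h : ∃ g : ℂ → ℂ, AnalyticAt ℂ g ρ ∧ g ρ ≠ 0 ∧ ∀ᶠ z in nhds ρ, f z = (z - ρ) ^ n * g z) :
    analyticOrderNatAt f ρ = n := by
  rw [analyticOrderNatAt, hf.analyticOrderAt_eq_natCast.mpr h, ENat.toNat_natCast]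

theorem neg_logDeriv_LFunction_mul_log (hχ : χ.IsPrimitive) (heven : χ.Even) (hχ1 : χ ≠ 1)
    (hs : LFunction χ s ≠ 0) {x : ℝ} (hx : 1 < x) :
    -logDeriv (LFunction χ) s * Real.log x =
      ∑ n ∈ Finset.Icc 2 ⌊x⌋₊, twistedVonMangoldt χ s n * Real.log (x / n) +
      deriv (logDeriv (LFunction χ)) s +
      ∑' ρ : {ρ // LFunction χ ρ = 0 ∧ 0 < ρ.re ∧ ρ.re < 1},
        analyticOrderNatAt (LFunction χ) ρ * (x : ℂ) ^ ((ρ : ℂ) - s) / ((ρ : ℂ) - s) ^ 2 +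
      ∑' k : ℕ, (x : ℂ) ^ (-2 * (k : ℂ) - s) / (2 * (k : ℂ) + s) ^ 2 := by
  have hx0 : 0 < x := one_pos.trans hx
  have hcpow : ∀ z : ℂ, (x : ℂ) ^ z = cexp (z * Real.log x) := fun z => by
    rw [cpow_def_of_ne_zero (ofReal_ne_zero.mpr hx0.ne'), ← ofReal_log hx0.le, mul_comm]
  have hzeros := hasSum_exp_zeros hχ1 hs (Real.log_pos hx)
  have hsplit := tsum_LFunction_zeros_eq_add hχ heven hχ1
    (g := fun ρ => analyticOrderNatAt (LFunction χ) ρ / (ρ - s) ^ 2 * cexp ((ρ - s) * Real.log x))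
    hzeros.summable
  have hsimple : ∀ k : ℕ, analyticOrderNatAt (LFunction χ) (-2 * k) = 1 := fun k => by
    rw [analyticOrderNatAt, analyticOrderAt_LFunction_neg_two_mul hχ heven hχ1, ENat.toNat_one]
  have hsq : ∀ k : ℕ, (-2 * k - s) ^ 2 = (2 * k + s) ^ 2 := fun k => by ring
  rw [hzeros.tsum_eq, tsum_twistedVonMangoldt_mul_max_eq_sum hx0] at hsplit
  simp only [hsimple, hsq, Nat.cast_one, ← hcpow, ← mul_div_right_comm, one_mul] at hsplit
  linear_combination hsplit

theorem explicit_formula_dirichlet_general (hprim : χ.IsPrimitive) (heven : χ.Even)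
    (hnontriv : χ ≠ 1) {x : ℝ} (hx : 1 < x) (hs : LFunction χ s ≠ 0) {m : ℂ → ℕ}
    (hm : ∀ ρ : ℂ, LFunction χ ρ = 0 → 0 < ρ.re → ρ.re < 1 →
      ∃ g : ℂ → ℂ, AnalyticAt ℂ g ρ ∧ g ρ ≠ 0 ∧
        ∀ᶠ z in nhds ρ, LFunction χ z = (z - ρ) ^ m ρ * g z) :
    -(deriv (LFunction χ) s / LFunction χ s) =
      (∑ n ∈ Finset.Icc 2 ⌊x⌋₊,
        (vonMangoldt n : ℂ) * χ n * (n : ℂ) ^ (-s) * ((Real.log (x / n) : ℂ) / (Real.log x : ℂ))) +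
      (1 / (Real.log x : ℂ)) * deriv (fun z => deriv (LFunction χ) z / LFunction χ z) s +
      (1 / (Real.log x : ℂ)) *
        ∑' ρ : {ρ : ℂ // LFunction χ ρ = 0 ∧ 0 < ρ.re ∧ ρ.re < 1},
          (m ρ : ℂ) * (x : ℂ) ^ ((ρ : ℂ) - s) / ((ρ : ℂ) - s) ^ 2 +
      (1 / (Real.log x : ℂ)) *
        ∑' k : ℕ, (x : ℂ) ^ (-2 * (k : ℂ) - s) / (2 * (k : ℂ) + s) ^ 2 := by
  have hlog : (Real.log x : ℂ) ≠ 0 := ofReal_ne_zero.mpr (Real.log_pos hx).ne'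
  have hmult : ∀ ρ : {ρ // LFunction χ ρ = 0 ∧ 0 < ρ.re ∧ ρ.re < 1},
      analyticOrderNatAt (LFunction χ) ρ = m ρ := fun ⟨ρ, h0, hre0, hre1⟩ =>
    analyticOrderNatAt_eq_of_eventually_eq ((differentiable_LFunction hnontriv).analyticAt ρ)
      (hm ρ h0 hre0 hre1)
  have hformula := neg_logDeriv_LFunction_mul_log hprim heven hnontriv hs hx
  simp only [hmult] at hformula
  change -logDeriv (LFunction χ) s =
    ∑ n ∈ Finset.Icc 2 ⌊x⌋₊, twistedVonMangoldt χ s n * (Real.log (x / n) / Real.log x) +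
      1 / Real.log x * deriv (logDeriv (LFunction χ)) s + _ + _
  simp only [← mul_div_assoc, ← Finset.sum_div, one_div_mul_eq_div, ← add_div]
  rw [eq_div_iff hlog, hformula]

end ExplicitFormula

/-- (Unconditional explicit formula for `-L'/L`.) Let `χ` be a primitive
even nontrivial Dirichlet character modulo `q`. For any `x ≥ 2` and any `s` which is not a
zero of `L(·,χ)` and not one of the trivial zeros `0, -2, -4, ...`, one has
`-L'/L(s,χ) = ∑_{2 ≤ n ≤ x} Λ(n)χ(n)n^{-s}(log(x/n)/log x) + (1/log x)(L'/L)'(s)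
  + (1/log x)∑_ρ m_ρ x^{ρ-s}/(ρ-s)² + (1/log x)∑_{m≥0} x^{-2m-s}/(2m+s)²`,
where `ρ` runs over the nontrivial zeros of `L(·,χ)`, counted with multiplicity `m ρ`. -/
theorem explicit_formula_dirichlet {q : ℕ} [NeZero q] (hq : 3 ≤ q)
    (χ : DirichletCharacter ℂ q) (hprim : χ.IsPrimitive)
    (heven : χ (-1) = 1) (hnontriv : χ ≠ 1)
    (x : ℝ) (hx : 2 ≤ x) (s : ℂ)
    (hs_nzero : DirichletCharacter.LFunction χ s ≠ 0)
    (hs_ntriv : ∀ m : ℕ, s ≠ -2 * (m : ℂ))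
    (m : ℂ → ℕ)
    (hm : ∀ ρ : ℂ, DirichletCharacter.LFunction χ ρ = 0 → 0 < ρ.re → ρ.re < 1 →
      ∃ g : ℂ → ℂ, AnalyticAt ℂ g ρ ∧ g ρ ≠ 0 ∧
        ∀ᶠ z in nhds ρ, DirichletCharacter.LFunction χ z = (z - ρ) ^ m ρ * g z) :
    -(deriv (DirichletCharacter.LFunction χ) s / DirichletCharacter.LFunction χ s) =
      (∑ n ∈ Finset.Icc 2 ⌊x⌋₊,
        (ArithmeticFunction.vonMangoldt n : ℂ) * χ (n : ZMod q) * (n : ℂ) ^ (-s) *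
          ((Real.log (x / n) : ℂ) / (Real.log x : ℂ))) +
      (1 / (Real.log x : ℂ)) *
        deriv (fun z => deriv (DirichletCharacter.LFunction χ) z /
          DirichletCharacter.LFunction χ z) s +
      (1 / (Real.log x : ℂ)) *
        ∑' ρ : {ρ : ℂ // DirichletCharacter.LFunction χ ρ = 0 ∧ 0 < ρ.re ∧ ρ.re < 1},
          (m ρ : ℂ) * (x : ℂ) ^ ((ρ : ℂ) - s) / ((ρ : ℂ) - s) ^ 2 +
      (1 / (Real.log x : ℂ)) *
        ∑' k : ℕ, (x : ℂ) ^ (-2 * (k : ℂ) - s) / (2 * (k : ℂ) + s) ^ 2 :=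
  explicit_formula_dirichlet_general hprim heven hnontriv (one_lt_two.trans_le hx) hs_nzero hm
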